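/- arXiv:2212.08644 — 3 statements merged into one kernel-verified Lean document; each statement's English description precedes it below -/
import Mathlib

section
/- Let (A, I) be a Henselian pair and let B be an A-algebra which is hfp over A with respect to I. If the induced ring map A/I → B/(I·B) is module-finite, then the structure map A → B is module-finite and of finite presentation. -/
universe u

/-- A ring homomorphism `ρ : R →+* H` exhibits `H` as a Henselization of the pair `(R, K)`:
`(H, K·H)` is a Henselian pair, and every map from `(R, K)` to a Henselian pair factors
uniquely through `ρ`. -/
def IsHenselization {R H : Type u} [CommRing R] [CommRing H]
    (K : Ideal R) (ρ : R →+* H) : Prop :=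
  HenselianRing H (K.map ρ) ∧
    ∀ (C : Type u) [CommRing C] (J : Ideal C), HenselianRing C J →
      ∀ f : R →+* C, K.map f ≤ J → ∃! g : H →+* C, g.comp ρ = f

/-- `φ : A →+* B` is Henselian finitely presented (hfp) with respect to `I`:
`B` is a Henselization of `(R, I·R)` for some finitely presented `A`-algebra `R`. -/
def IsHfp {A B : Type u} [CommRing A] [CommRing B] (φ : A →+* B) (I : Ideal A) : Prop :=
  ∃ (R : Type u) (_ : CommRing R) (ψ : A →+* R) (ρ : R →+* B),
    ψ.FinitePresentation ∧ ρ.comp ψ = φ ∧ IsHenselization (I.map ψ) ρ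

/-- `φ : A →+* B` is h-formally étale with respect to `I`. -/
def IsHFormallyEtale {A B : Type u} [CommRing A] [CommRing B] (φ : A →+* B) (I : Ideal A) :
    Prop :=
  ∀ (E C : Type u) [CommRing E] [CommRing C] (e : A →+* E) (c : A →+* C)
    (p : E →+* C) (u : B →+* C),
    p.comp e = c → u.comp φ = c →
    (∃ N : ℕ, 1 ≤ N ∧ Ideal.map e (I ^ N) = ⊥ ∧ Ideal.map c (I ^ N) = ⊥) →
    Function.Surjective p →
    (∃ M : ℕ, 1 ≤ M ∧ RingHom.ker p ^ M = ⊥) →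
    ∃! v : B →+* E, v.comp φ = e ∧ p.comp v = u

/-- `φ : A →+* B` is h-formally smooth with respect to `I`. -/
def IsHFormallySmooth {A B : Type u} [CommRing A] [CommRing B] (φ : A →+* B) (I : Ideal A) :
    Prop :=
  ∀ (E C : Type u) [CommRing E] [CommRing C] (e : A →+* E) (c : A →+* C)
    (p : E →+* C) (u : B →+* C),
    p.comp e = c → u.comp φ = c →
    (∃ N : ℕ, 1 ≤ N ∧ Ideal.map e (I ^ N) = ⊥ ∧ Ideal.map c (I ^ N) = ⊥) →
    Function.Surjective p →
    (∃ M : ℕ, 1 ≤ M ∧ RingHom.ker p ^ M = ⊥) →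
    ∃ v : B →+* E, v.comp φ = e ∧ p.comp v = u

/-- `φ : A →+* B` is h-étale with respect to `I`: `B` is a Henselization of `(R, I·R)`
for some étale `A`-algebra `R`. -/
def IsHEtale {A B : Type u} [CommRing A] [CommRing B] (φ : A →+* B) (I : Ideal A) : Prop :=
  ∃ (R : Type u) (_ : CommRing R) (_ : Algebra A R) (ρ : R →+* B),
    Algebra.Etale A R ∧ ρ.comp (algebraMap A R) = φ ∧
      IsHenselization (I.map (algebraMap A R)) ρ

/-- `φ : A →+* B` is h-smooth with respect to `I`: `B` is a Henselization of `(R, I·R)`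
for some smooth `A`-algebra `R`. -/
def IsHSmooth {A B : Type u} [CommRing A] [CommRing B] (φ : A →+* B) (I : Ideal A) : Prop :=
  ∃ (R : Type u) (_ : CommRing R) (_ : Algebra A R) (ρ : R →+* B),
    Algebra.Smooth A R ∧ ρ.comp (algebraMap A R) = φ ∧
      IsHenselization (I.map (algebraMap A R)) ρ

/-- A ring homomorphism is flat if it makes the target into a flat module over the source. -/
def RingHomFlat {A C : Type u} [CommRing A] [CommRing C] (f : A →+* C) : Prop :=
  letI := f.toAlgebra
  Module.Flat A C

/-- A ring homomorphism is smooth if it makes the target into a smooth algebra over the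
source (smooth = formally smooth + finitely presented). -/
def RingHomSmooth {A C : Type u} [CommRing A] [CommRing C] (f : A →+* C) : Prop :=
  letI := f.toAlgebra
  Algebra.Smooth A C

/-- A ring homomorphism is étale if it makes the target into an étale algebra over the
source (étale = formally étale + finitely presented). -/
def RingHomEtale {A C : Type u} [CommRing A] [CommRing C] (f : A →+* C) : Prop :=
  letI := f.toAlgebra
  Algebra.Etale A C

/-!
Say `B` is the Henselization of `(R, IR)` with `R` finitely presented over `A`. Mapping `B` to the
trivial Henselian pair `(R/IR, 0)` shows that `R/IR` is finite over `A`. Zariski's main theorem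
provides a finite subalgebra `F` of `R` and `c ∈ F` with `c ≡ 1` modulo `IR` and `F[1/c] =
R[1/c]`; lifting an idempotent of `F/IF` gives an idempotent `e ≡ 1` modulo `IR` of `R` such that
`R/(1 - e)` is finite over `A`. An integral algebra over a Henselian pair is again a Henselian
pair, so `R/(1 - e)` is a Henselization of `(R, IR)` too, and `B ≅ R/(1 - e)`.

Idempotents of integral algebras, hence also the roots witnessing Henselianity, come from
factoring a monic polynomial congruent to `X ^ m * (X - 1) ^ k` modulo `I`. Coprime factorizations
are the sections of an étale algebra, so what has to be lifted is a section modulo `I` of such an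
algebra `E`. Inverting an element of `E` makes the section an isomorphism `E/IE ≅ A/I`. The same
use of Zariski's main theorem then produces a finite flat quotient `E/(1 - e)` onto which `A`
surjects, so that `A ≅ E/(1 - e)` is the desired section. The idempotent it takes has rank one
modulo `I`; it arises from a characteristic polynomial congruent to `(X - 1) * X ^ n`, which has a
root congruent to `1` directly by the Henselian property of `(A, I)`.
-/

open Polynomial TensorProduct

section Algebra

variable {A S : Type*} [CommRing A] [CommRing S] [Algebra A S]

theorem map_algebraMap_le_ker {D : Type*} [CommRing D] [Algebra A D] {I : Ideal A}
    (σ : S →ₐ[A] D) (hI : I ≤ RingHom.ker (algebraMap A D)) :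
    I.map (algebraMap A S) ≤ RingHom.ker σ :=
  Ideal.map_le_iff_le_comap.2 fun a ha => by
    rw [Ideal.mem_comap, RingHom.mem_ker, σ.commutes]
    exact hI ha

theorem map_le_jacobson_bot_of_isIntegral [Algebra.IsIntegral A S] {I : Ideal A}
    (hI : I ≤ Ideal.jacobson ⊥) : I.map (algebraMap A S) ≤ Ideal.jacobson ⊥ :=
  Ideal.map_le_iff_le_comap.2 fun _ ha => Ideal.mem_sInf.2 fun M hM =>
    have := hM.2
    Ideal.mem_sInf.1 (hI ha) ⟨bot_le, Ideal.isMaximal_comap_of_isIntegral_of_isMaximal M⟩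

theorem surjective_algebraMap_of_forall_sub_mem [Module.Finite A S] {I : Ideal A}
    (hI : I ≤ Ideal.jacobson ⊥)
    (h : ∀ s : S, ∃ α : A, s - algebraMap A S α ∈ I.map (algebraMap A S)) :
    Function.Surjective (algebraMap A S) := by
  have hle : (⊤ : Submodule A S) ≤ LinearMap.range (Algebra.linearMap A S) := by
    refine Submodule.le_of_le_smul_of_le_jacobson_bot Module.Finite.fg_top hI fun s _ => ?_
    obtain ⟨α, hα⟩ := h s
    refine Submodule.mem_sup.2 ⟨algebraMap A S α, ⟨α, rfl⟩, _, ?_, add_sub_cancel _ _⟩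
    rwa [Ideal.smul_top_eq_map]
  exact fun s => hle (Submodule.mem_top (x := s))

theorem bijective_algebraMap_of_flat [Module.Flat A S]
    (hsurj : Function.Surjective (algebraMap A S))
    (hker : RingHom.ker (algebraMap A S) ≤ Ideal.jacobson ⊥) :
    Function.Bijective (algebraMap A S) := by
  refine ⟨(injective_iff_map_eq_zero _).2 fun x hx => ?_, hsurj⟩
  have : (RingHom.ker (Algebra.ofId A S)).Pure :=
    Module.Flat.of_linearEquiv (Ideal.quotientKerAlgEquivOfSurjective hsurj).toLinearEquiv
  obtain ⟨y, hy, hxy⟩ := Ideal.exists_eq_mul_of_pure (I := RingHom.ker (Algebra.ofId A S)) hx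
  have hunit : IsUnit (1 - y) :=
    Ideal.isUnit_of_sub_one_mem_jacobson_bot _ (by simpa using neg_mem (hker hy))
  exact (hunit.mul_left_eq_zero).1 (by linear_combination hxy)

theorem eq_one_of_isIdempotentElem_of_sub_one_mem {J : Ideal S}
    (hJ : J ≤ Ideal.jacobson ⊥) {e : S} (he : IsIdempotentElem e) (heJ : e - 1 ∈ J) : e = 1 :=
  (IsIdempotentElem.iff_eq_one_of_isUnit (Ideal.isUnit_of_sub_one_mem_jacobson_bot _ (hJ heJ))).1 he

theorem sq_pow_sub_pow_mem {J : Ideal A} {c : A} {k m : ℕ} (hc : c ^ k * (c - 1) ∈ J)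
    (hkm : k ≤ m) : (c ^ (m + 1)) ^ 2 - c ^ (m + 1) ∈ J := by
  obtain ⟨y, hy⟩ := sub_one_dvd_pow_sub_one c (m + 1)
  obtain ⟨l, rfl⟩ := Nat.exists_eq_add_of_le hkm
  have hfactor : (c ^ (k + l + 1)) ^ 2 - c ^ (k + l + 1) =
      c ^ k * (c - 1) * (c ^ (l + 1) * y) := by
    linear_combination c ^ (k + l + 1) * hy
  exact hfactor ▸ J.mul_mem_right _ hc

end Algebra

/-! ### Lifting idempotents -/

section Idempotent

variable {A F : Type*} [CommRing A]

section Module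

variable {V : Type*} [AddCommGroup V] [Module A V]

theorem aeval_charpoly_eq_zero_of_represents {ι : Type*} [Fintype ι] [DecidableEq ι] {b : ι → V}
    (hb : Submodule.span A (Set.range b) = ⊤) {M : Matrix ι ι A} {f : Module.End A V}
    (hM : M.Represents b f) : aeval f M.charpoly = 0 := by
  let M' : Matrix.isRepresentation A b := ⟨M, f, hM⟩
  have hM' : aeval M' M.charpoly = 0 := Subtype.val_injective <| by
    rw [Polynomial.aeval_subalgebra_coe, Matrix.aeval_self_charpoly, Subalgebra.coe_zero]
  rw [← Matrix.isRepresentation.eq_toEnd_of_represents A b hb M' hM, aeval_algHom_apply, hM',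
    map_zero]

theorem exists_monic_aeval_eq_zero_of_sub_smul_mem {ι : Type*} [Fintype ι]
    {b : ι → V} (hb : Submodule.span A (Set.range b) = ⊤) (I : Ideal A) {f : Module.End A V}
    {d : ι → A} (hf : ∀ i, f (b i) - d i • b i ∈ (I • ⊤ : Submodule A V)) :
    ∃ Q : A[X], Q.Monic ∧ aeval f Q = 0 ∧
      Q.map (Ideal.Quotient.mk I) = ∏ i, (X - C (Ideal.Quotient.mk I (d i))) := by
  classical
  have hN : ∀ j, ∃ c : ι → A, (∀ i, c i ∈ I) ∧ ∑ i, c i • b i = f (b j) - d j • b j := fun j => by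
    have hfj := hf j
    rw [← hb, Submodule.mem_ideal_smul_span_iff_exists_sum] at hfj
    obtain ⟨c, hc, hsum⟩ := hfj
    exact ⟨c, hc, by rw [← hsum, Finsupp.sum_fintype]; simp only [zero_smul, implies_true]⟩
  choose N hNI hN using hN
  let M : Matrix ι ι A := Matrix.diagonal d + Matrix.of fun i j => N j i
  have hrep : M.Represents b f := Matrix.represents_iff'.2 fun j => by
    simp [M, Matrix.diagonal_apply, add_smul, Finset.sum_add_distrib, hN]
  have hmap : M.map (Ideal.Quotient.mk I) =
      Matrix.diagonal fun i => Ideal.Quotient.mk I (d i) := by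
    ext i j
    by_cases hij : i = j <;>
      simp [M, hij, Ideal.Quotient.eq_zero_iff_mem.2 (hNI j _)]
  refine ⟨M.charpoly, M.charpoly_monic, aeval_charpoly_eq_zero_of_represents hb hrep, ?_⟩
  rw [← Matrix.charpoly_map, hmap, Matrix.charpoly_diagonal]

end Module

variable [CommRing F] [Algebra A F]

theorem exists_monic_aeval_eq_zero_of_rank_one_mod [Module.Finite A F] {I : Ideal A}
    (hI : I ≤ Ideal.jacobson ⊥) {w : F} (hw : w ^ 2 - w ∈ I.map (algebraMap A F))
    (hx : ∀ x : F, ∃ α : A, w * (x - algebraMap A F α) ∈ I.map (algebraMap A F)) :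
    ∃ (Q : A[X]) (n : ℕ), Q.Monic ∧ aeval w Q = 0 ∧
      Q.map (Ideal.Quotient.mk I) = (X - 1) * X ^ n := by
  have hmem {y : F} (hy : y ∈ I.map (algebraMap A F)) : y ∈ (I • ⊤ : Submodule A F) := by
    rwa [Ideal.smul_top_eq_map]
  obtain ⟨s, hs⟩ := (Module.Finite.fg_top : (⊤ : Submodule A F).FG)
  -- Modulo `I`, this spanning family makes multiplication by `w` diagonal: `1, 0, …, 0`.
  let v : Option s → F := fun o => o.elim w fun i => (1 - w) * i
  have hmul (x : F) : (1 - w) * x ∈ Submodule.span A (Set.range v) := by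
    have hle : Submodule.span A s ≤
        (Submodule.span A (Set.range v)).comap (LinearMap.mulLeft A (1 - w)) :=
      Submodule.span_le.2 fun y hy => Submodule.subset_span ⟨some ⟨y, hy⟩, rfl⟩
    exact hle (hs ▸ Submodule.mem_top)
  have hspan : Submodule.span A (Set.range v) = ⊤ := by
    refine eq_top_iff.2 (Submodule.le_of_le_smul_of_le_jacobson_bot Module.Finite.fg_top hI ?_)
    intro x _
    obtain ⟨α, hα⟩ := hx x
    refine Submodule.mem_sup.2 ⟨(1 - w) * x + α • w, add_mem (hmul x) (Submodule.smul_mem _ _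
      (Submodule.subset_span ⟨none, rfl⟩)), _, hmem hα, ?_⟩
    rw [Algebra.smul_def]
    ring
  obtain ⟨Q, hQ, hQw, hQI⟩ := exists_monic_aeval_eq_zero_of_sub_smul_mem hspan I
    (f := Algebra.lmul A F w) (d := fun o => o.elim 1 fun _ => 0) <| by
      rintro (_ | i)
      · simpa [v, sq] using hmem hw
      · have hmul : w * ((1 - w) * i) = (w ^ 2 - w) * (-i) := by ring
        simpa [v, hmul] using hmem (Ideal.mul_mem_right (-(i : F)) _ hw)
  refine ⟨Q, s.card, hQ, ?_, by simpa [Fintype.prod_option] using hQI⟩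
  rw [aeval_algHom_apply] at hQw
  simpa using LinearMap.congr_fun hQw 1

theorem aeval_sub_aeval_mem_map {I : Ideal A} {p q : A[X]}
    (hpq : p.map (Ideal.Quotient.mk I) = q.map (Ideal.Quotient.mk I)) (x : F) :
    aeval x p - aeval x q ∈ I.map (algebraMap A F) := by
  have hcoeff : p - q ∈ I.map C := Ideal.mem_map_C_iff.2 fun n => by
    rw [coeff_sub, ← Ideal.Quotient.eq, ← coeff_map, ← coeff_map, hpq]
  have hmem := Ideal.mem_map_of_mem (aeval (R := A) x) hcoeff
  rwa [map_sub, ← Ideal.map_coe (aeval x), Ideal.map_map, ← algebraMap_eq,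
    (aeval x).comp_algebraMap] at hmem

theorem isCoprime_X_sub_C_of_isUnit_eval {p : A[X]} {a : A} (hp : IsUnit (p.eval a)) :
    IsCoprime p (X - C a) := by
  obtain ⟨u, hu⟩ := hp.exists_left_inv
  obtain ⟨q, hq⟩ := X_sub_C_dvd_sub_C_eval (p := p) (a := a)
  refine ⟨C u, -(C u * q), ?_⟩
  have : C u * C (p.eval a) = 1 := by rw [← C_mul, hu, C_1]
  linear_combination C u * hq + this

theorem exists_isIdempotentElem_of_isCoprime {G H : A[X]} (hGH : IsCoprime G H) {b : F}
    (hb : aeval b (G * H) = 0) {I : Ideal A} {m n : ℕ}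
    (hG : G.map (Ideal.Quotient.mk I) = X ^ (m + 1))
    (hH : H.map (Ideal.Quotient.mk I) = (X - 1) ^ (n + 1))
    (hbI : b ^ 2 - b ∈ I.map (algebraMap A F)) :
    ∃ e : F, IsIdempotentElem e ∧ e - b ∈ I.map (algebraMap A F) := by
  have hGb : aeval b G - b ^ (m + 1) ∈ I.map (algebraMap A F) := by
    simpa only [map_pow, aeval_X] using
      aeval_sub_aeval_mem_map (q := X ^ (m + 1)) (by simpa using hG) b
  have hHb : aeval b H - (b - 1) ^ (n + 1) ∈ I.map (algebraMap A F) := by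
    have hmem := aeval_sub_aeval_mem_map (q := (X - 1) ^ (n + 1)) (by simpa using hH) b
    simpa only [map_pow, map_sub, aeval_X, map_one] using hmem
  obtain ⟨r, s, hrs⟩ := hGH
  have hrsb : aeval b r * aeval b G + aeval b s * aeval b H = 1 := by
    simpa only [map_add, map_mul, map_one] using congr_arg (aeval b) hrs
  rw [map_mul] at hb
  refine ⟨aeval b r * aeval b G, ?_, ?_⟩
  · rw [IsIdempotentElem]
    linear_combination aeval b r * aeval b G * hrsb - aeval b r * aeval b s * hb
  · have hdiff : aeval b r * aeval b G - b =
        (aeval b G - b ^ (m + 1)) * (aeval b r * (1 - b)) -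
          (aeval b H - (b - 1) ^ (n + 1)) * (aeval b s * b) -
          (b ^ 2 - b) * (aeval b r * b ^ m + aeval b s * (b - 1) ^ n) := by
      linear_combination b * hrsb
    rw [hdiff]
    exact sub_mem (sub_mem (Ideal.mul_mem_right _ _ hGb) (Ideal.mul_mem_right _ _ hHb))
      (Ideal.mul_mem_right _ _ hbI)

theorem exists_isIdempotentElem_of_rank_one_mod [Module.Finite A F] (I : Ideal A)
    [HenselianRing A I] {w : F} (hw : w ^ 2 - w ∈ I.map (algebraMap A F))
    (hx : ∀ x : F, ∃ α : A, w * (x - algebraMap A F α) ∈ I.map (algebraMap A F)) :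
    ∃ e : F, IsIdempotentElem e ∧ e - w ∈ I.map (algebraMap A F) := by
  have hI : I ≤ Ideal.jacobson ⊥ := HenselianRing.jac
  obtain ⟨Q, n, hQ, hQw, hQI⟩ := exists_monic_aeval_eq_zero_of_rank_one_mod hI hw hx
  have hmk (p : A[X]) (a : A) : Ideal.Quotient.mk I (p.eval a) =
      (p.map (Ideal.Quotient.mk I)).eval (Ideal.Quotient.mk I a) := (eval_map_apply ..).symm
  obtain ⟨a, ha, ha1⟩ := HenselianRing.is_henselian (I := I) Q hQ 1
    (by rw [← Ideal.Quotient.eq_zero_iff_mem, hmk, hQI]; simp)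
    (by rw [hmk, ← derivative_map, hQI]; simp)
  have haunit : IsUnit a := Ideal.isUnit_of_sub_one_mem_jacobson_bot _ (hI ha1)
  obtain ⟨G, rfl⟩ := dvd_iff_isRoot.2 ha
  have hmka : Ideal.Quotient.mk I a = 1 := by
    rwa [← map_one (Ideal.Quotient.mk I), Ideal.Quotient.eq]
  have hGI : G.map (Ideal.Quotient.mk I) = X ^ n :=
    (monic_X_sub_C (1 : A ⧸ I)).isRegular.left <| by simpa [hmka] using hQI
  have hGa : IsUnit (G.eval a) := Ideal.isUnit_of_sub_one_mem_jacobson_bot _ <| hI <| by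
    rw [← Ideal.Quotient.eq, hmk, hGI, hmka]; simp
  refine exists_isIdempotentElem_of_isCoprime (G := G * X) (H := X - C a) (m := n) (n := 0)
    (isCoprime_X_sub_C_of_isUnit_eval ?_) ?_ ?_ ?_ hw
  · simpa using hGa.mul haunit
  · rw [mul_right_comm, map_mul, mul_comm G, hQw, zero_mul]
  · simp [hGI, pow_succ]
  · simp [hmka]

end Idempotent

/-! ### Algebras that are finite modulo an ideal -/

section FiniteMod

variable {A R : Type*} [CommRing A] [CommRing R] [Algebra A R]

theorem exists_isIntegral_notMem_of_map_le [Algebra.FiniteType A R] (I : Ideal A)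
    [Module.Finite A (R ⧸ I.map (algebraMap A R))] (q : Ideal R) [q.IsPrime]
    (hq : I.map (algebraMap A R) ≤ q) :
    ∃ r ∉ q, IsIntegral A r ∧ ∀ x : R, ∃ m, IsIntegral A (r ^ m * x) := by
  have hIq : I.map (algebraMap A R) ≤ (q.under A).map (algebraMap A R) :=
    Ideal.map_mono (Ideal.map_le_iff_le_comap.1 hq)
  have : Module.Finite A (R ⧸ (q.under A).map (algebraMap A R)) :=
    Module.Finite.of_surjective (Ideal.Quotient.factorₐ A hIq).toLinearMap
      (Ideal.Quotient.factor_surjective hIq)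
  have : Algebra.WeaklyQuasiFiniteAt A q := by
    unfold Algebra.WeaklyQuasiFiniteAt
    infer_instance
  exact Algebra.zariskisMainProperty_iff.1
    (Algebra.ZariskisMainProperty.of_finiteType_of_weaklyQuasiFiniteAt (R := A) q)

theorem exists_isIntegral_sub_one_mem [Algebra.FiniteType A R] (I : Ideal A)
    [Module.Finite A (R ⧸ I.map (algebraMap A R))] :
    ∃ c : R, c - 1 ∈ I.map (algebraMap A R) ∧ IsIntegral A c ∧
      ∀ x : R, ∃ m, IsIntegral A (c ^ m * x) := by
  let C := integralClosure A R
  let 𝔠 : Ideal C := ⨅ x : R, ((1 : Submodule C R).colon {x}).radical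
  have mem_𝔠 (s : C) : s ∈ 𝔠 ↔ ∀ x : R, ∃ m, IsIntegral A ((s : R) ^ m * x) := by
    simp only [𝔠, Ideal.mem_iInf, Ideal.mem_radical_iff, Submodule.mem_colon_singleton,
      Submodule.mem_one]
    refine forall_congr' fun x => exists_congr fun m => ⟨?_, fun h => ⟨⟨_, h⟩, rfl⟩⟩
    rintro ⟨y, hy⟩
    have hyx : (y : R) = s ^ m * x := hy
    exact hyx ▸ y.2
  let K : Ideal C := RingHom.ker (algebraMap C (R ⧸ I.map (algebraMap A R)))
  -- A maximal ideal containing `𝔠` and `K` would lie under a prime of `R` containing `IR`, near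
  -- which `R` and `C` agree by Zariski's main theorem.
  have htop : 𝔠 ⊔ K = ⊤ := by
    by_contra hne
    obtain ⟨P, hP, hle⟩ := Ideal.exists_le_maximal _ hne
    have : Algebra.IsIntegral C (R ⧸ I.map (algebraMap A R)) := Algebra.IsIntegral.tower_top A
    obtain ⟨Q, -, hQ, rfl⟩ := Ideal.exists_ideal_over_prime_of_isIntegral P
      (⊥ : Ideal (R ⧸ I.map (algebraMap A R))) (le_sup_right.trans hle)
    obtain ⟨r, hrQ, hr, hrx⟩ := exists_isIntegral_notMem_of_map_le I
      (Q.comap (Ideal.Quotient.mk (I.map (algebraMap A R)))) fun x hx => by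
        rw [Ideal.mem_comap, Ideal.Quotient.eq_zero_iff_mem.2 hx]
        exact Q.zero_mem
    exact hrQ (hle (Ideal.mem_sup_left ((mem_𝔠 ⟨r, hr⟩).2 hrx)))
  obtain ⟨c, hc, k, hk, hck⟩ := Submodule.mem_sup.1 (htop ▸ Submodule.mem_top (x := (1 : C)))
  refine ⟨c, ?_, c.2, (mem_𝔠 c).1 hc⟩
  have hkI : (k : R) ∈ I.map (algebraMap A R) := Ideal.Quotient.eq_zero_iff_mem.1 hk
  have hsum : (c : R) + k = 1 := congr_arg Subtype.val hck
  rw [← hsum, sub_add_cancel_left]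
  exact neg_mem hkI

theorem exists_pow_mul_mem_of_mem_adjoin {F : Subalgebra A R} {c : R} (hcF : c ∈ F) {s : Set R}
    (hs : ∀ x ∈ s, ∃ m : ℕ, c ^ m * x ∈ F) {x : R} (hx : x ∈ Algebra.adjoin A s) :
    ∃ m : ℕ, c ^ m * x ∈ F := by
  induction hx using Algebra.adjoin_induction with
  | mem x hx => exact hs x hx
  | algebraMap a => exact ⟨0, by simp⟩
  | add x y _ _ hx hy =>
    obtain ⟨m, hm⟩ := hx
    obtain ⟨n, hn⟩ := hy
    refine ⟨m + n, ?_⟩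
    have hsum : c ^ (m + n) * (x + y) = c ^ n * (c ^ m * x) + c ^ m * (c ^ n * y) := by ring
    exact hsum ▸ add_mem (mul_mem (pow_mem hcF n) hm) (mul_mem (pow_mem hcF m) hn)
  | mul x y _ _ hx hy =>
    obtain ⟨m, hm⟩ := hx
    obtain ⟨n, hn⟩ := hy
    refine ⟨m + n, ?_⟩
    have hprod : c ^ (m + n) * (x * y) = (c ^ m * x) * (c ^ n * y) := by ring
    exact hprod ▸ mul_mem hm hn

theorem exists_finite_subalgebra_sub_one_mem [Algebra.FiniteType A R] (I : Ideal A)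
    [Module.Finite A (R ⧸ I.map (algebraMap A R))] :
    ∃ (F : Subalgebra A R) (c : F), Module.Finite A F ∧ (c : R) - 1 ∈ I.map (algebraMap A R) ∧
      ∀ x : R, ∃ m : ℕ, (c : R) ^ m * x ∈ F := by
  classical
  obtain ⟨c, hcI, hc, hx⟩ := exists_isIntegral_sub_one_mem (R := R) I
  choose m hm using hx
  obtain ⟨s, hs⟩ := (Algebra.FiniteType.out : (⊤ : Subalgebra A R).FG)
  let t : Finset R := insert c (s.image fun x => c ^ m x * x)
  have hcF : c ∈ Algebra.adjoin A (t : Set R) :=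
    Algebra.subset_adjoin (Finset.mem_insert_self _ _)
  refine ⟨Algebra.adjoin A t, ⟨c, hcF⟩, ?_, hcI, fun x => ?_⟩
  · refine Algebra.finite_adjoin_of_finite_of_isIntegral t.finite_toSet fun y hy => ?_
    obtain rfl | hy := Finset.mem_insert.1 hy
    · exact hc
    · obtain ⟨x, -, rfl⟩ := Finset.mem_image.1 hy
      exact hm x
  · refine exists_pow_mul_mem_of_mem_adjoin (s := s) hcF (fun y hy => ⟨m y, ?_⟩)
      (hs ▸ Algebra.mem_top)
    exact Algebra.subset_adjoin (Finset.mem_insert_of_mem (Finset.mem_image_of_mem _ hy))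

theorem exists_pow_mul_mem_map {F : Subalgebra A R} {c : F}
    (hc : ∀ x : R, ∃ m : ℕ, (c : R) ^ m * x ∈ F) {I : Ideal A} {z : F}
    (hz : (z : R) ∈ I.map (algebraMap A R)) :
    ∃ n : ℕ, c ^ n * z ∈ I.map (algebraMap A F) := by
  suffices H : ∀ y ∈ (I • ⊤ : Submodule A R), ∃ (n : ℕ) (t : F),
      t ∈ I.map (algebraMap A F) ∧ (t : R) = c ^ n * y by
    obtain ⟨n, t, ht, htz⟩ := H z (by rwa [Ideal.smul_top_eq_map])
    have : t = c ^ n * z := Subtype.val_injective (by simpa using htz)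
    exact ⟨n, this ▸ ht⟩
  intro y hy
  induction hy using Submodule.smul_induction_on' with
  | smul a ha x _ =>
    obtain ⟨m, hm⟩ := hc x
    refine ⟨m, a • ⟨_, hm⟩, ?_, by simp⟩
    rw [Algebra.smul_def]
    exact Ideal.mul_mem_right _ _ (Ideal.mem_map_of_mem _ ha)
  | add x _ y _ hx hy =>
    obtain ⟨m, t, ht, htx⟩ := hx
    obtain ⟨n, u, hu, huy⟩ := hy
    refine ⟨m + n, c ^ n * t + c ^ m * u,
      add_mem (Ideal.mul_mem_left _ _ ht) (Ideal.mul_mem_left _ _ hu), ?_⟩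
    push_cast
    rw [htx, huy]
    ring

theorem coe_sub_one_mem_of_sub_pow_mem {F : Subalgebra A R} {I : Ideal A} {c e : F}
    (hc : (c : R) - 1 ∈ I.map (algebraMap A R)) {n : ℕ}
    (hec : e - c ^ n ∈ I.map (algebraMap A F)) : (e : R) - 1 ∈ I.map (algebraMap A R) := by
  have hecR : (e : R) - c ^ n ∈ I.map (algebraMap A R) := by
    simpa [Ideal.map_map, ← IsScalarTower.algebraMap_eq] using
      Ideal.mem_map_of_mem (algebraMap F R) hec
  have hcn : (c : R) ^ n - 1 ∈ I.map (algebraMap A R) :=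
    Ideal.mem_of_dvd _ (sub_one_dvd_pow_sub_one _ n) hc
  simpa only [sub_add_sub_cancel] using add_mem hecR hcn

theorem finite_quotient_span_one_sub {F : Subalgebra A R} [Module.Finite A F] {c : F}
    (hc : ∀ x : R, ∃ m : ℕ, (c : R) ^ m * x ∈ F) {I : Ideal A} (hI : I ≤ Ideal.jacobson ⊥)
    {e : F} (he : IsIdempotentElem e) {n : ℕ} (hec : e - c ^ (n + 1) ∈ I.map (algebraMap A F)) :
    Module.Finite A (R ⧸ Ideal.span {1 - (e : R)}) := by
  have hunit : IsUnit (1 - (e - c ^ (n + 1))) := Ideal.isUnit_of_sub_one_mem_jacobson_bot _ <| by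
    rw [sub_sub_cancel_left]
    exact neg_mem (map_le_jacobson_bot_of_isIntegral hI hec)
  obtain ⟨u, hu⟩ := hunit.exists_right_inv
  have hecu : e = e * (c * (c ^ n * u)) := by
    linear_combination -e * hu - u * he.eq
  have hpow (m : ℕ) : e = e * (c * (c ^ n * u)) ^ m := by
    induction m with
    | zero => simp
    | succ m ih => rw [pow_succ, ← mul_assoc, ← ih, ← hecu]
  refine Module.Finite.of_surjective
    ((Ideal.Quotient.mkₐ A (Ideal.span {1 - (e : R)})).comp F.val).toLinearMap fun y => ?_
  obtain ⟨x, rfl⟩ := Ideal.Quotient.mk_surjective y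
  obtain ⟨m, hm⟩ := hc x
  refine ⟨e * (c ^ n * u) ^ m * ⟨_, hm⟩, Ideal.Quotient.eq.2 (Ideal.mem_span_singleton'.2 ⟨-x, ?_⟩)⟩
  have := congr_arg Subtype.val (hpow m)
  push_cast at this
  simp only [RingHom.coe_coe, Subalgebra.coe_val]
  push_cast
  linear_combination x * this

end FiniteMod

/-! ### Lifting sections of étale algebras -/

section Section

variable {A R : Type*} [CommRing A] [CommRing R] [Algebra A R]

theorem exists_pow_forall_exists_pow_mul_sub_mem [Module.Finite A R] {J : Ideal R} {c : R}
    (h : ∀ x : R, ∃ (α : A) (n : ℕ), c ^ n * (x - algebraMap A R α) ∈ J) :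
    ∃ n : ℕ, ∀ x : R, ∃ α : A, c ^ n * (x - algebraMap A R α) ∈ J := by
  let S (n : ℕ) : Submodule A R :=
    1 ⊔ (J.restrictScalars A).comap (LinearMap.mulLeft A (c ^ n))
  have mem_S {n : ℕ} {x : R} : x ∈ S n ↔ ∃ α : A, c ^ n * (x - algebraMap A R α) ∈ J := by
    constructor
    · intro hx
      obtain ⟨y, hy, z, hz, rfl⟩ := Submodule.mem_sup.1 hx
      obtain ⟨α, rfl⟩ := Submodule.mem_one.1 hy
      exact ⟨α, by simpa using hz⟩
    · rintro ⟨α, hα⟩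
      exact Submodule.mem_sup.2 ⟨_, Submodule.mem_one.2 ⟨α, rfl⟩, _, hα, add_sub_cancel _ _⟩
  have hmono : Monotone S := monotone_nat_of_le_succ fun n =>
    sup_le_sup_left (fun x hx => by
      simpa [pow_succ', mul_assoc] using J.mul_mem_left c hx) _
  have htop : ⨆ n, S n = ⊤ := eq_top_iff.2 fun x _ => by
    obtain ⟨α, n, hn⟩ := h x
    exact Submodule.mem_iSup_of_mem n (mem_S.2 ⟨α, hn⟩)
  obtain ⟨n, hn⟩ := Module.Finite.fg_top.stabilizes_of_iSup_eq ⟨S, hmono⟩ htop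
  exact ⟨n, fun x => mem_S.1 (hn.le (Submodule.mem_top (x := x)))⟩

theorem exists_isIdempotentElem_sub_one_mem_of_forall_sub_mem [Algebra.FiniteType A R]
    (I : Ideal A) [HenselianRing A I]
    (hR : ∀ x : R, ∃ α : A, x - algebraMap A R α ∈ I.map (algebraMap A R)) :
    ∃ e : R, IsIdempotentElem e ∧ e - 1 ∈ I.map (algebraMap A R) ∧
      Module.Finite A (R ⧸ Ideal.span {1 - e}) := by
  have : Module.Finite A (R ⧸ I.map (algebraMap A R)) := by
    refine Module.Finite.of_surjective (Algebra.linearMap A _) fun y => ?_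
    obtain ⟨x, rfl⟩ := Ideal.Quotient.mk_surjective y
    obtain ⟨α, hα⟩ := hR x
    exact ⟨α, (Ideal.Quotient.eq.2 hα).symm⟩
  obtain ⟨F, c, hF, hcI, hc⟩ := exists_finite_subalgebra_sub_one_mem (R := R) I
  obtain ⟨k, hk⟩ := exists_pow_mul_mem_map hc (z := c - 1) (by simpa using hcI)
  obtain ⟨n, hn⟩ := exists_pow_forall_exists_pow_mul_sub_mem (A := A) (c := c)
    (J := I.map (algebraMap A F)) fun x => by
      obtain ⟨α, hα⟩ := hR x
      obtain ⟨m, hm⟩ := exists_pow_mul_mem_map hc (z := x - algebraMap A F α) hα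
      exact ⟨α, m, hm⟩
  obtain ⟨e, he, hec⟩ := exists_isIdempotentElem_of_rank_one_mod I
    (sq_pow_sub_pow_mem hk (Nat.le_add_right k n)) fun x => by
      obtain ⟨α, hα⟩ := hn x
      refine ⟨α, ?_⟩
      rw [show k + n + 1 = (k + 1) + n by ring, pow_add, mul_assoc]
      exact Ideal.mul_mem_left _ _ hα
  exact ⟨e, congr_arg Subtype.val he.eq, coe_sub_one_mem_of_sub_pow_mem hcI hec,
    finite_quotient_span_one_sub hc HenselianRing.jac he hec⟩

theorem exists_algHom_lift_of_isIdempotentElem [Module.Flat A R] {I : Ideal A}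
    (hI : I ≤ Ideal.jacobson ⊥) (σ : R →ₐ[A] A ⧸ I) {e : R} (he : IsIdempotentElem e)
    (hσe : σ e = 1) [Module.Finite A (R ⧸ Ideal.span {1 - e})]
    (hR : ∀ x : R, ∃ α : A, e * (x - algebraMap A R α) ∈ I.map (algebraMap A R)) :
    ∃ τ : R →ₐ[A] A, ∀ x, Ideal.Quotient.mk I (τ x) = σ x := by
  let D := R ⧸ Ideal.span {1 - e}
  have : IsLocalization.Away e D := IsLocalization.Away.quotient_of_isIdempotentElem he
  have : Module.Flat R D := IsLocalization.flat D (Submonoid.powers e)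
  have : Module.Flat A D := Module.Flat.trans A R D
  have hone : Ideal.Quotient.mk (Ideal.span {1 - e}) e = 1 := by
    rw [eq_comm, ← map_one (Ideal.Quotient.mk (Ideal.span {1 - e})), Ideal.Quotient.eq]
    exact Ideal.mem_span_singleton_self _
  have hsurj : Function.Surjective (algebraMap A D) := by
    refine surjective_algebraMap_of_forall_sub_mem hI fun d => ?_
    obtain ⟨x, rfl⟩ := Ideal.Quotient.mk_surjective d
    obtain ⟨α, hα⟩ := hR x
    have hmem := Ideal.mem_map_of_mem (Ideal.Quotient.mk (Ideal.span {1 - e})) hα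
    rw [map_mul, hone, one_mul, map_sub, Ideal.map_map] at hmem
    exact ⟨α, hmem⟩
  let σD : D →ₐ[A] A ⧸ I := Ideal.Quotient.liftₐ _ σ fun x hx => by
    obtain ⟨y, rfl⟩ := Ideal.mem_span_singleton'.1 hx
    rw [map_mul, map_sub, map_one, hσe, sub_self, mul_zero]
  have hker : RingHom.ker (algebraMap A D) ≤ I := fun a ha => by
    rw [← Ideal.Quotient.eq_zero_iff_mem, ← Ideal.Quotient.algebraMap_eq, ← σD.commutes,
      (RingHom.mem_ker).1 ha, map_zero]
  let equiv : A ≃ₐ[A] D := AlgEquiv.ofBijective (Algebra.ofId A D)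
    (bijective_algebraMap_of_flat hsurj (hker.trans hI))
  refine ⟨(equiv.symm : D →ₐ[A] A).comp (Ideal.Quotient.mkₐ A _), fun x => ?_⟩
  have hσD : σD (algebraMap A D (equiv.symm (Ideal.Quotient.mk _ x))) = σ x := by
    rw [show algebraMap A D (equiv.symm (Ideal.Quotient.mk _ x)) = Ideal.Quotient.mk _ x from
      equiv.apply_symm_apply _]
    rfl
  rw [← hσD, σD.commutes]
  rfl

theorem exists_algHom_lift_of_forall_sub_mem [Algebra.FiniteType A R] [Module.Flat A R]
    (I : Ideal A) [HenselianRing A I] (σ : R →ₐ[A] A ⧸ I)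
    (hR : ∀ x : R, ∃ α : A, x - algebraMap A R α ∈ I.map (algebraMap A R)) :
    ∃ τ : R →ₐ[A] A, ∀ x, Ideal.Quotient.mk I (τ x) = σ x := by
  obtain ⟨e, he, heI, hfin⟩ := exists_isIdempotentElem_sub_one_mem_of_forall_sub_mem I hR
  refine exists_algHom_lift_of_isIdempotentElem HenselianRing.jac σ he ?_ fun x => ?_
  · rw [← sub_eq_zero, ← map_one σ, ← map_sub]
    exact map_algebraMap_le_ker σ Ideal.mk_ker.ge heI
  · obtain ⟨α, hα⟩ := hR x
    exact ⟨α, Ideal.mul_mem_left _ _ hα⟩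

theorem exists_forall_mul_mem_map_of_formallyUnramified [Algebra.EssFiniteType A R]
    [Algebra.FormallyUnramified A R] {I : Ideal A} (σ : R →ₐ[A] A ⧸ I) :
    ∃ h : R, σ h = 1 ∧ ∀ x, σ x = 0 → h * x ∈ I.map (algebraMap A R) := by
  obtain ⟨t, ht, ht1⟩ := (Algebra.FormallyUnramified.iff_exists_tensorProduct (R := A)).1
    (inferInstance : Algebra.FormallyUnramified A R)
  let IR := I.map (algebraMap A R)
  let ι : A ⧸ I →ₐ[A] R ⧸ IR := Ideal.quotientMapₐ IR (Algebra.ofId A R) Ideal.le_comap_map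
  let σ' : R ⧸ IR →ₐ[A] A ⧸ I := Ideal.Quotient.liftₐ IR σ fun x hx =>
    map_algebraMap_le_ker σ Ideal.mk_ker.ge hx
  let φ : R ⊗[A] R →ₐ[A] R ⧸ IR :=
    Algebra.TensorProduct.lift (Ideal.Quotient.mkₐ A IR) (ι.comp σ) fun _ _ => Commute.all _ _
  have hφ : σ'.comp φ = σ.comp (Algebra.TensorProduct.lmul' A) := by
    ext x
    · have hσ' : σ' (Ideal.Quotient.mk IR x) = σ x := rfl
      simp [φ, hσ']
    · have hι : σ'.comp ι = AlgHom.id A (A ⧸ I) := AlgHom.ext fun y => by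
        obtain ⟨a, rfl⟩ := Ideal.Quotient.mk_surjective y
        exact (σ'.comp ι).commutes a
      simpa [φ] using DFunLike.congr_fun hι (σ x)
  obtain ⟨h, hh⟩ := Ideal.Quotient.mk_surjective (φ t)
  refine ⟨h, ?_, fun x hx => ?_⟩
  · have := DFunLike.congr_fun hφ t
    simp only [AlgHom.comp_apply, ht1, map_one, ← hh] at this
    exact this
  · have := congr_arg φ (ht x)
    simp only [map_mul, map_sub, ← hh, φ, Algebra.TensorProduct.lift_tmul,
      Ideal.Quotient.mkₐ_eq_mk, map_one, AlgHom.comp_apply, hx, map_zero, mul_zero, mul_one,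
      zero_sub, neg_mul, neg_eq_zero] at this
    rwa [← map_mul, Ideal.Quotient.eq_zero_iff_mem, mul_comm] at this

theorem exists_algHom_lift_of_formallyUnramified [Algebra.FiniteType A R] [Module.Flat A R]
    [Algebra.FormallyUnramified A R] (I : Ideal A) [HenselianRing A I] (σ : R →ₐ[A] A ⧸ I) :
    ∃ τ : R →ₐ[A] A, ∀ x, Ideal.Quotient.mk I (τ x) = σ x := by
  obtain ⟨h, hσ, hh⟩ := exists_forall_mul_mem_map_of_formallyUnramified σ
  let L := Localization.Away h
  have : Module.Flat R L := IsLocalization.flat L (Submonoid.powers h)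
  have : Module.Flat A L := Module.Flat.trans A R L
  have : Algebra.FiniteType R L :=
    have := IsLocalization.Away.finitePresentation (S := L) h
    inferInstance
  have : Algebra.FiniteType A L := Algebra.FiniteType.trans ‹_› this
  let σL : L →ₐ[A] A ⧸ I := IsLocalization.liftAlgHom (M := Submonoid.powers h) (f := σ) <| by
    rintro ⟨_, n, rfl⟩
    simp [hσ]
  have hL (y : L) : ∃ α : A, y - algebraMap A L α ∈ I.map (algebraMap A L) := by
    obtain ⟨⟨x, _, n, rfl⟩, hy⟩ := IsLocalization.surj (Submonoid.powers h) y
    obtain ⟨α, hα⟩ := Ideal.Quotient.mk_surjective (σ x)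
    have hmem := Ideal.mem_map_of_mem (algebraMap R L) (hh (x - algebraMap A R α * h ^ n) (by
      simp [hσ, ← hα]))
    rw [Ideal.map_map, ← IsScalarTower.algebraMap_eq] at hmem
    have hunit : IsUnit (algebraMap R L h) := IsLocalization.Away.algebraMap_isUnit h
    refine ⟨α, (Ideal.unit_mul_mem_iff_mem _ (hunit.pow (n + 1))).1 ?_⟩
    convert hmem using 1
    simp only [map_mul, map_sub, map_pow, ← IsScalarTower.algebraMap_apply] at hy ⊢
    linear_combination algebraMap R L h * hy
  obtain ⟨τ, hτ⟩ := exists_algHom_lift_of_forall_sub_mem I σL hL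
  refine ⟨τ.comp (IsScalarTower.toAlgHom A R L), fun x => ?_⟩
  rw [AlgHom.comp_apply, hτ]
  exact IsLocalization.lift_eq _ x

end Section

/-! ### Integral algebras over Henselian pairs -/

section Integral

variable {A S : Type*} [CommRing A] [CommRing S] [Algebra A S]

theorem exists_mul_eq_isCoprime_of_map_quotient (I : Ideal A) [HenselianRing A I] {m k : ℕ}
    {p : MonicDegreeEq A (m + k)} {g : MonicDegreeEq (A ⧸ I) m} {h : MonicDegreeEq (A ⧸ I) k}
    (hp : g.1 * h.1 = p.1.map (Ideal.Quotient.mk I)) (hgh : IsCoprime g.1 h.1) :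
    ∃ (G : MonicDegreeEq A m) (H : MonicDegreeEq A k), G.1 * H.1 = p.1 ∧ IsCoprime G.1 H.1 ∧
      G.map (Ideal.Quotient.mk I) = g ∧ H.map (Ideal.Quotient.mk I) = h := by
  let equiv := UniversalCoprimeFactorizationRing.homEquiv (A ⧸ I) m k rfl p
  let σ := equiv.symm ⟨(g, h), hp, hgh⟩
  obtain ⟨τ, hτ⟩ := exists_algHom_lift_of_formallyUnramified I σ
  have hτσ : (Ideal.Quotient.mkₐ A I).comp τ = σ := AlgHom.ext hτ
  obtain ⟨hq, hqcop⟩ := (UniversalCoprimeFactorizationRing.homEquiv A m k rfl p τ).2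
  have hσ : equiv ((Ideal.Quotient.mkₐ A I).comp τ) = ⟨(g, h), hp, hgh⟩ := by
    rw [hτσ, Equiv.apply_symm_apply]
  refine ⟨_, _, by simpa using hq, hqcop, ?_, ?_⟩
  · exact (UniversalCoprimeFactorizationRing.homEquiv_comp_fst ..).symm.trans
      (congr_arg (·.1.1) hσ)
  · exact (UniversalCoprimeFactorizationRing.homEquiv_comp_snd ..).symm.trans
      (congr_arg (·.1.2) hσ)

theorem exists_mul_eq_isCoprime_of_map_quotient_eq_X_pow_mul (I : Ideal A) [HenselianRing A I]
    {p : A[X]} (hp : p.Monic) {m k : ℕ}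
    (hpI : p.map (Ideal.Quotient.mk I) = X ^ m * (X - 1) ^ k) :
    ∃ G H : A[X], G * H = p ∧ IsCoprime G H ∧ G.map (Ideal.Quotient.mk I) = X ^ m ∧
      H.map (Ideal.Quotient.mk I) = (X - 1) ^ k := by
  cases subsingleton_or_nontrivial (A ⧸ I)
  · exact ⟨p, 1, mul_one p, isCoprime_one_right, Subsingleton.elim _ _, Subsingleton.elim _ _⟩
  have hmonic : ((X - 1 : (A ⧸ I)[X]) ^ k).Monic := (monic_X_sub_C 1).pow k
  have hdeg : ((X - 1 : (A ⧸ I)[X]) ^ k).natDegree = k := by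
    rw [← C_1, (monic_X_sub_C 1).natDegree_pow, natDegree_X_sub_C, mul_one]
  have hpdeg : p.natDegree = m + k := by
    rw [← hp.natDegree_map (Ideal.Quotient.mk I), hpI, (monic_X_pow m).natDegree_mul hmonic, hdeg,
      natDegree_X_pow]
  obtain ⟨G, H, hGH, hcop, hG, hH⟩ := exists_mul_eq_isCoprime_of_map_quotient I
    (p := .mk p hp hpdeg) (g := .mk _ (monic_X_pow m) (natDegree_X_pow m))
    (h := .mk _ hmonic hdeg) hpI.symm (IsCoprime.pow ⟨1, -1, by ring⟩)
  exact ⟨G.1, H.1, hGH, hcop, congr_arg Subtype.val hG, congr_arg Subtype.val hH⟩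

theorem map_quotient_eq_X_pow_natDegree {I : Ideal A} {p : A[X]} (hp : p.Monic)
    (hpI : ∀ i, i ≠ p.natDegree → p.coeff i ∈ I) :
    p.map (Ideal.Quotient.mk I) = X ^ p.natDegree := by
  ext i
  rw [coeff_map, coeff_X_pow]
  split_ifs with hi
  · rw [hi, hp.coeff_natDegree, map_one]
  · exact Ideal.Quotient.eq_zero_iff_mem.2 (hpI i hi)

theorem exists_isIdempotentElem_sub_mem_map [Algebra.IsIntegral A S] (I : Ideal A)
    [HenselianRing A I] {b : S} (hb : b ^ 2 - b ∈ I.map (algebraMap A S)) :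
    ∃ e : S, IsIdempotentElem e ∧ e - b ∈ I.map (algebraMap A S) := by
  cases subsingleton_or_nontrivial A
  · have := Module.subsingleton A S
    exact ⟨b, Subsingleton.elim _ _, by simp⟩
  obtain ⟨p, hp, hpb, hpI⟩ := exists_monic_aeval_eq_zero_forall_mem_of_mem_map hb
  let q : A[X] := X ^ 2 - X
  have hq : q.Monic := by dsimp only [q]; monicity!
  have hqdeg : q.natDegree = 2 := by dsimp only [q]; compute_degree!
  have hmap : (p.comp q * q).map (Ideal.Quotient.mk I) =
      X ^ (p.natDegree + 1) * (X - 1) ^ (p.natDegree + 1) := by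
    rw [Polynomial.map_mul, Polynomial.map_comp, map_quotient_eq_X_pow_natDegree hp hpI,
      X_pow_comp, ← pow_succ, ← mul_pow]
    simp only [q, Polynomial.map_sub, Polynomial.map_pow, map_X]
    ring
  obtain ⟨G, H, hGH, hcop, hG, hH⟩ := exists_mul_eq_isCoprime_of_map_quotient_eq_X_pow_mul I
    ((hp.comp hq (by simp [hqdeg])).mul hq) hmap
  refine exists_isIdempotentElem_of_isCoprime hcop ?_ hG hH hb
  rw [hGH, map_mul, aeval_comp]
  simp [q, hpb]

theorem exists_mul_X_sub_C_add_C_eval (f : S[X]) (a : S) :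
    ∃ g : S[X], f = g * (X - C a) + C (f.eval a) ∧ g.eval a = f.derivative.eval a := by
  obtain ⟨g, hg⟩ := X_sub_C_dvd_sub_C_eval (p := f) (a := a)
  have hfg : f = g * (X - C a) + C (f.eval a) := by linear_combination hg
  refine ⟨g, hfg, ?_⟩
  rw [hfg]
  simp

theorem exists_isRoot_of_isIdempotentElem {J : Ideal S} (hJ : J ≤ Ideal.jacobson ⊥) {f : S[X]}
    (hf : f.Monic) (σ : AdjoinRoot f →ₐ[S] S ⧸ J) {e : AdjoinRoot f} (he : IsIdempotentElem e)
    (hσe : σ e = 1) {a₀ : S} (hσ : σ (AdjoinRoot.root f) = Ideal.Quotient.mk J a₀)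
    (hea : e * (AdjoinRoot.root f - algebraMap S _ a₀) ∈ J.map (algebraMap S (AdjoinRoot f))) :
    ∃ a : S, f.IsRoot a ∧ a - a₀ ∈ J := by
  have := hf.free_adjoinRoot
  have := hf.finite_adjoinRoot
  obtain ⟨τ, hτ⟩ := exists_algHom_lift_of_isIdempotentElem hJ σ he hσe fun y => by
    obtain ⟨p, rfl⟩ := AdjoinRoot.mk_surjective y
    obtain ⟨g, hg, -⟩ := exists_mul_X_sub_C_add_C_eval p a₀
    refine ⟨p.eval a₀, ?_⟩
    have : e * (AdjoinRoot.mk f p - algebraMap S _ (p.eval a₀)) =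
        AdjoinRoot.mk f g * (e * (AdjoinRoot.root f - algebraMap S _ a₀)) := by
      have hgp := congr_arg (AdjoinRoot.mk f) hg
      simp only [map_add, map_mul, map_sub, AdjoinRoot.mk_X, AdjoinRoot.mk_C] at hgp
      rw [AdjoinRoot.algebraMap_eq]
      linear_combination e * hgp
    exact this ▸ Ideal.mul_mem_left _ _ hea
  refine ⟨τ (AdjoinRoot.root f), ?_, ?_⟩
  · rw [IsRoot, ← coe_aeval_eq_eval, aeval_algHom_apply, AdjoinRoot.aeval_eq, AdjoinRoot.mk_self,
      map_zero]
  · rw [← Ideal.Quotient.eq, hτ, hσ]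

theorem henselianRing_of_exists_isIdempotentElem {J : Ideal S} (hJ : J ≤ Ideal.jacobson ⊥)
    (h : ∀ f : S[X], f.Monic → ∀ b : AdjoinRoot f,
      b ^ 2 - b ∈ J.map (algebraMap S (AdjoinRoot f)) →
        ∃ e, IsIdempotentElem e ∧ e - b ∈ J.map (algebraMap S (AdjoinRoot f))) :
    HenselianRing S J := by
  refine ⟨hJ, fun f hf a₀ hfa hfa' => ?_⟩
  obtain ⟨g, hg, hga⟩ := exists_mul_X_sub_C_add_C_eval f a₀
  obtain ⟨q, hq, -⟩ := exists_mul_X_sub_C_add_C_eval g a₀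
  have := isLocalHom_of_le_jacobson_bot J hJ
  obtain ⟨v, hv⟩ := (isUnit_of_map_unit (Ideal.Quotient.mk J) _ hfa').exists_right_inv
  let φ := AdjoinRoot.mk f
  have hfaT : φ (C (f.eval a₀)) ∈ J.map (algebraMap S (AdjoinRoot f)) :=
    Ideal.mem_map_of_mem (algebraMap S (AdjoinRoot f)) hfa
  have hφg : φ g * φ (X - C a₀) = - φ (C (f.eval a₀)) := by
    rw [← map_mul, eq_neg_iff_add_eq_zero, ← map_add, ← hg, AdjoinRoot.mk_self]
  -- Modulo `J`, `f` is the product of the coprime factors `g` and `X - C a₀`, and `C v * g` is the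
  -- idempotent of the component where `X = a₀`.
  obtain ⟨e, he, heb⟩ := h f hf (φ (C v * g)) <| by
    have hCv : C (f.derivative.eval a₀) * C v = 1 := by rw [← C_mul, hv, C_1]
    have : (C v * g) ^ 2 - C v * g = C v ^ 2 * q * (g * (X - C a₀)) := by
      rw [hga] at hq
      linear_combination C v ^ 2 * g * hq + C v * g * hCv
    rw [← map_pow, ← map_sub, this, map_mul, map_mul φ g, hφg]
    exact Ideal.mul_mem_left _ _ (neg_mem hfaT)
  let σ : AdjoinRoot f →ₐ[S] S ⧸ J := AdjoinRoot.liftAlgHom f (Algebra.ofId S _)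
    (Ideal.Quotient.mk J a₀) ((eval₂_at_apply _ _).trans (Ideal.Quotient.eq_zero_iff_mem.2 hfa))
  have hσ (p : S[X]) : σ (φ p) = Ideal.Quotient.mk J (p.eval a₀) := eval₂_at_apply _ _
  refine exists_isRoot_of_isIdempotentElem hJ hf σ he ?_ (by simpa [φ] using hσ X) ?_
  · have := map_algebraMap_le_ker σ Ideal.mk_ker.ge heb
    rw [RingHom.mem_ker, map_sub, hσ, sub_eq_zero] at this
    rw [this, eval_mul, eval_C, hga, mul_comm, hv, map_one]
  · have : e * φ (X - C a₀) = φ (X - C a₀) * (e - φ (C v * g)) - φ (C v) * φ (C (f.eval a₀)) := by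
      rw [map_mul φ (C v)]
      linear_combination φ (C v) * hφg
    rw [← AdjoinRoot.mk_X, AdjoinRoot.algebraMap_eq, ← AdjoinRoot.mk_C, ← map_sub, this]
    exact sub_mem (Ideal.mul_mem_left _ _ heb) (Ideal.mul_mem_left _ _ hfaT)

theorem henselianRing_map_of_isIntegral [Algebra.IsIntegral A S] (I : Ideal A) [HenselianRing A I] :
    HenselianRing S (I.map (algebraMap A S)) := by
  refine henselianRing_of_exists_isIdempotentElem
    (map_le_jacobson_bot_of_isIntegral HenselianRing.jac) fun f hf b hb => ?_
  have := hf.finite_adjoinRoot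
  have : Algebra.IsIntegral A (AdjoinRoot f) := Algebra.IsIntegral.trans (R := A) S
  rw [Ideal.map_map, ← IsScalarTower.algebraMap_eq] at hb ⊢
  exact exists_isIdempotentElem_sub_mem_map I hb

theorem henselianRing_bot : HenselianRing S ⊥ where
  jac := bot_le
  is_henselian f _ a ha _ := ⟨a, ha, by simp⟩

theorem exists_isIdempotentElem_sub_one_mem [Algebra.FiniteType A S] (I : Ideal A)
    [HenselianRing A I] [Module.Finite A (S ⧸ I.map (algebraMap A S))] :
    ∃ e : S, IsIdempotentElem e ∧ e - 1 ∈ I.map (algebraMap A S) ∧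
      Module.Finite A (S ⧸ Ideal.span {1 - e}) := by
  obtain ⟨F, c, hF, hcI, hc⟩ := exists_finite_subalgebra_sub_one_mem (R := S) I
  obtain ⟨k, hk⟩ := exists_pow_mul_mem_map hc (z := c - 1) (by simpa using hcI)
  obtain ⟨e, he, hec⟩ := exists_isIdempotentElem_sub_mem_map I (sq_pow_sub_pow_mem hk le_rfl)
  exact ⟨e, congr_arg Subtype.val he.eq, coe_sub_one_mem_of_sub_pow_mem hcI hec,
    finite_quotient_span_one_sub hc HenselianRing.jac he hec⟩

end Integral

/-! ### Henselizations -/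

namespace IsHenselization

variable {R H : Type u} [CommRing R] [CommRing H] [Algebra R H] {K : Ideal R}

theorem nonempty_unique_algHom (hH : IsHenselization K (algebraMap R H)) (C : Type u) [CommRing C]
    [Algebra R C] (hC : HenselianRing C (K.map (algebraMap R C))) :
    Nonempty (Unique (H →ₐ[R] C)) := by
  obtain ⟨g, hg, huniq⟩ := hH.2 C _ hC (algebraMap R C) le_rfl
  exact ⟨⟨⟨{ g with commutes' := RingHom.congr_fun hg }⟩, fun g' =>
    AlgHom.coe_ringHom_injective (huniq _ g'.comp_algebraMap)⟩⟩

theorem nonempty_algEquiv {H' : Type u} [CommRing H'] [Algebra R H']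
    (hH : IsHenselization K (algebraMap R H)) (hH' : IsHenselization K (algebraMap R H')) :
    Nonempty (H ≃ₐ[R] H') := by
  obtain ⟨f⟩ := hH.nonempty_unique_algHom H' hH'.1
  obtain ⟨g⟩ := hH'.nonempty_unique_algHom H hH.1
  obtain ⟨_⟩ := hH.nonempty_unique_algHom H hH.1
  obtain ⟨_⟩ := hH'.nonempty_unique_algHom H' hH'.1
  exact ⟨AlgEquiv.ofAlgHom f.default g.default (Subsingleton.elim _ _) (Subsingleton.elim _ _)⟩

theorem quotient_mk {e : R} (he : IsIdempotentElem e) (heK : e - 1 ∈ K)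
    (hD : HenselianRing (R ⧸ Ideal.span {1 - e}) (K.map (Ideal.Quotient.mk (Ideal.span {1 - e})))) :
    IsHenselization K (Ideal.Quotient.mk (Ideal.span {1 - e})) := by
  refine ⟨hD, fun C _ J hC f hf => ?_⟩
  have hfe : f e = 1 := eq_one_of_isIdempotentElem_of_sub_one_mem hC.jac (he.map f) <| by
    simpa using hf (Ideal.mem_map_of_mem f heK)
  refine ⟨Ideal.Quotient.lift _ f ?_, Ideal.Quotient.lift_comp_mk _ _ _, fun g hg =>
    Ideal.Quotient.ringHom_ext (hg.trans (Ideal.Quotient.lift_comp_mk _ _ _).symm)⟩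
  change Ideal.span {1 - e} ≤ RingHom.ker f
  simp [Ideal.span_le, hfe]

variable {A : Type*} [CommRing A] [Algebra A R] [Algebra A H] [IsScalarTower A R H]

theorem finite_quotient_map {I : Ideal A}
    (hH : IsHenselization (I.map (algebraMap A R)) (algebraMap R H))
    [Module.Finite A (H ⧸ I.map (algebraMap A H))] :
    Module.Finite A (R ⧸ I.map (algebraMap A R)) := by
  let IR := I.map (algebraMap A R)
  obtain ⟨g⟩ := hH.nonempty_unique_algHom (R ⧸ IR) <| by
    rw [Ideal.Quotient.algebraMap_eq, Ideal.map_quotient_self]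
    exact henselianRing_bot
  let gA : H →ₐ[A] R ⧸ IR := g.default.restrictScalars A
  have hker : I.map (algebraMap A H) ≤ RingHom.ker gA := map_algebraMap_le_ker gA fun a ha =>
    Ideal.Quotient.eq_zero_iff_mem.2 (Ideal.mem_map_of_mem _ ha)
  refine Module.Finite.of_surjective (Ideal.Quotient.liftₐ _ gA hker).toLinearMap fun y => ?_
  obtain ⟨x, rfl⟩ := Ideal.Quotient.mk_surjective y
  exact ⟨Ideal.Quotient.mk _ (algebraMap R H x), g.default.commutes x⟩

theorem exists_algEquiv_quotient [Algebra.FiniteType A R] (I : Ideal A) [HenselianRing A I]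
    (hH : IsHenselization (I.map (algebraMap A R)) (algebraMap R H))
    [Module.Finite A (H ⧸ I.map (algebraMap A H))] :
    ∃ e : R, Module.Finite A (R ⧸ Ideal.span {1 - e}) ∧
      Nonempty ((R ⧸ Ideal.span {1 - e}) ≃ₐ[R] H) := by
  have := hH.finite_quotient_map
  obtain ⟨e, he, heI, hfin⟩ := exists_isIdempotentElem_sub_one_mem (S := R) I
  have hD := henselianRing_map_of_isIntegral (S := R ⧸ Ideal.span {1 - e}) I
  rw [IsScalarTower.algebraMap_eq A R, ← Ideal.map_map] at hD
  exact ⟨e, hfin, (quotient_mk he heI hD).nonempty_algEquiv hH⟩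

end IsHenselization

/-- If `B` is hfp over the Henselian pair `(A, I)` and `A/I → B/IB` is module-finite, then
`A → B` is module-finite and of finite presentation. -/
theorem finite_and_finitePresentation_of_isHfp_of_finite_mod
    {A B : Type u} [CommRing A] [CommRing B] [Algebra A B]
    (I : Ideal A) [HenselianRing A I]
    (hhfp : IsHfp (algebraMap A B) I)
    (hfin : (Ideal.quotientMap (I.map (algebraMap A B)) (algebraMap A B)
      Ideal.le_comap_map).Finite) :
    (algebraMap A B).Finite ∧ (algebraMap A B).FinitePresentation := by
  obtain ⟨R, _, ψ, ρ, hψ, hρψ, hB⟩ := hhfp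
  algebraize [ψ, ρ]
  have : IsScalarTower A R B := .of_algebraMap_eq' hρψ.symm
  have : Module.Finite A (B ⧸ I.map (algebraMap A B)) := RingHom.finite_algebraMap.1
    (hfin.comp (RingHom.Finite.of_surjective _ Ideal.Quotient.mk_surjective))
  obtain ⟨e, _, ⟨equiv⟩⟩ := IsHenselization.exists_algEquiv_quotient (A := A) (R := R) I hB
  have : Algebra.FinitePresentation A (R ⧸ Ideal.span {1 - e}) :=
    .quotient (Submodule.fg_span_singleton _)
  rw [RingHom.finite_algebraMap, RingHom.finitePresentation_algebraMap]
  exact ⟨.equiv (equiv.restrictScalars A).toLinearEquiv, .equiv (equiv.restrictScalars A)⟩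
end

section
/- Let (A, I) be a Henselian pair and let B be an A-algebra which is hfp over A with respect to I. Then the map A → B is h-formally étale if and only if for every integer r ≥ 1 the induced ring map A/I^r → B/(I^r·B) is étale. -/
universe u

/-!
Let `B` be the Henselization of `(R, IR)` with `R` finitely presented over `A`. Modulo a power of
`I`, Henselization does nothing: `R / I^r R` is Henselian along the nilpotent image of `I`, so the
universal property identifies `B / I^r B` with `R / I^r R`, which is finitely presented over
`A / I^r`. What remains is the lifting property. The algebras testing h-formal étaleness are exactly
the algebras over some `A / I^r`, and since `B / I^r B` is the pushout of `B` along `A → A / I^r`,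
lifting problems for `B` with values in such algebras are the same as lifting problems for
`B / I^r B`.
-/

universe v

section UniqueLifting

variable {A B E C : Type*} [CommRing A] [CommRing B] [CommRing E] [CommRing C]

/-- `φ : A →+* B` is left orthogonal to `p : E →+* C` along `e : A →+* E`: every commutative square
from `φ` to `p` with top edge `e` has a unique diagonal filler. Fixing `e` makes it possible to
compare `φ` with its reduction modulo an ideal of `A` that `e` kills. -/
def HasUniqueLift (φ : A →+* B) (e : A →+* E) (p : E →+* C) : Prop :=
  ∀ u : B →+* C, u.comp φ = p.comp e → ∃! v : B →+* E, v.comp φ = e ∧ p.comp v = u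

variable {φ : A →+* B} {K : Ideal A}

theorem exists_comp_mk_eq_of_comp_eq {e : A ⧸ K →+* E} {v : B →+* E}
    (h : v.comp φ = e.comp (Ideal.Quotient.mk K)) :
    ∃ w : B ⧸ K.map φ →+* E, w.comp (Ideal.Quotient.mk (K.map φ)) = v := by
  have hker : K.map φ ≤ RingHom.ker v := by
    rw [← Ideal.map_eq_bot_iff_le_ker, Ideal.map_map, h, ← Ideal.map_map, Ideal.map_quotient_self,
      Ideal.map_bot]
  exact ⟨Ideal.Quotient.lift _ v hker, Ideal.Quotient.lift_comp_mk _ v hker⟩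

theorem comp_quotientMap_eq_iff {e : A ⧸ K →+* E} {w : B ⧸ K.map φ →+* E} :
    w.comp (Ideal.quotientMap (K.map φ) φ Ideal.le_comap_map) = e ↔
      (w.comp (Ideal.Quotient.mk (K.map φ))).comp φ = e.comp (Ideal.Quotient.mk K) := by
  rw [RingHom.comp_assoc, ← Ideal.quotientMap_comp_mk Ideal.le_comap_map, ← RingHom.comp_assoc,
    RingHom.cancel_right Ideal.Quotient.mk_surjective]

theorem hasUniqueLift_quotientMap_iff {e : A ⧸ K →+* E} {p : E →+* C} :
    HasUniqueLift (Ideal.quotientMap (K.map φ) φ Ideal.le_comap_map) e p ↔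
      HasUniqueLift φ (e.comp (Ideal.Quotient.mk K)) p := by
  have comp_eq_iff (w : B ⧸ K.map φ →+* E) (u : B ⧸ K.map φ →+* C) :
      p.comp w = u ↔ p.comp (w.comp (Ideal.Quotient.mk _)) = u.comp (Ideal.Quotient.mk _) := by
    rw [← RingHom.comp_assoc, RingHom.cancel_right Ideal.Quotient.mk_surjective]
  simp only [HasUniqueLift, comp_quotientMap_eq_iff, comp_eq_iff]
  constructor
  · intro h u hu
    obtain ⟨u, rfl⟩ := exists_comp_mk_eq_of_comp_eq (e := p.comp e) hu
    obtain ⟨w, hw, hunique⟩ := h u hu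
    refine ⟨w.comp (Ideal.Quotient.mk _), hw, fun v hv ↦ ?_⟩
    obtain ⟨w', rfl⟩ := exists_comp_mk_eq_of_comp_eq hv.1
    rw [hunique w' hv]
  · intro h u hu
    obtain ⟨v, hv, hunique⟩ := h (u.comp (Ideal.Quotient.mk _)) hu
    obtain ⟨w, rfl⟩ := exists_comp_mk_eq_of_comp_eq hv.1
    exact ⟨w, hv, fun w' hw' ↦
      (RingHom.cancel_right Ideal.Quotient.mk_surjective).1 (hunique _ hw')⟩

theorem hasUniqueLift_of_formallyEtale (hφ : φ.FormallyEtale) (e : A →+* E) {p : E →+* C}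
    (hp : Function.Surjective p) (hnil : IsNilpotent (RingHom.ker p)) : HasUniqueLift φ e p := by
  intro u hu
  algebraize [φ, e, p.comp e]
  let pₐ : E →ₐ[A] C := ⟨p, fun _ ↦ rfl⟩
  let uₐ : B →ₐ[A] C := ⟨u, RingHom.congr_fun hu⟩
  let vₐ : B →ₐ[A] E := Algebra.FormallySmooth.liftOfSurjective uₐ pₐ hp hnil
  have hpv (b : B) : p (vₐ b) = u b :=
    Algebra.FormallySmooth.liftOfSurjective_apply uₐ pₐ hp hnil b
  refine ⟨vₐ, ⟨vₐ.comp_algebraMap, RingHom.ext hpv⟩, fun w ⟨hwφ, hpw⟩ ↦ ?_⟩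
  let wₐ : B →ₐ[A] E := ⟨w, RingHom.congr_fun hwφ⟩
  have hwv : wₐ = vₐ := Algebra.FormallyUnramified.ext' p hnil wₐ vₐ fun b ↦
    (RingHom.congr_fun hpw b).trans (hpv b).symm
  exact congrArg (fun f : B →ₐ[A] E ↦ (f : B →+* E)) hwv

end UniqueLifting

theorem formallyEtale_of_hasUniqueLift {A : Type u} {B : Type v} [CommRing A] [CommRing B]
    {φ : A →+* B}
    (h : ∀ (E C : Type (max u v)) [CommRing E] [CommRing C] (e : A →+* E) (p : E →+* C),
      Function.Surjective p → IsNilpotent (RingHom.ker p) → HasUniqueLift φ e p) :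
    φ.FormallyEtale := by
  algebraize [φ]
  refine Algebra.FormallyEtale.iff_comp_bijective.2 fun E _ _ J hJ ↦ ?_
  have hlift (w : B →ₐ[A] E ⧸ J) := h E (E ⧸ J) (algebraMap A E) (Ideal.Quotient.mk J)
    Ideal.Quotient.mk_surjective ⟨2, by rwa [Ideal.mk_ker]⟩ w w.comp_algebraMap
  constructor
  · intro f g hfg
    obtain ⟨v, -, hunique⟩ := hlift ((Ideal.Quotient.mkₐ A J).comp f)
    have hf := hunique f ⟨f.comp_algebraMap, rfl⟩
    have hg := hunique g ⟨g.comp_algebraMap,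
      congrArg (fun k : B →ₐ[A] E ⧸ J ↦ (k : B →+* E ⧸ J)) hfg.symm⟩
    exact AlgHom.coe_ringHom_injective (hf.trans hg.symm)
  · intro w
    obtain ⟨v, ⟨hvφ, hvw⟩, -⟩ := hlift w
    exact ⟨⟨v, RingHom.congr_fun hvφ⟩, AlgHom.coe_ringHom_injective hvw⟩

theorem formallyEtale_iff_hasUniqueLift {A : Type u} {B : Type v} [CommRing A] [CommRing B]
    {φ : A →+* B} :
    φ.FormallyEtale ↔
      ∀ (E C : Type (max u v)) [CommRing E] [CommRing C] (e : A →+* E) (p : E →+* C),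
        Function.Surjective p → IsNilpotent (RingHom.ker p) → HasUniqueLift φ e p :=
  ⟨fun hφ _ _ _ _ e _ hp hnil ↦ hasUniqueLift_of_formallyEtale hφ e hp hnil,
    formallyEtale_of_hasUniqueLift⟩

section HFormallyEtale

variable {A B : Type u} [CommRing A] [CommRing B] {φ : A →+* B} {I : Ideal A}

theorem isHFormallyEtale_iff_hasUniqueLift :
    IsHFormallyEtale φ I ↔ ∀ r : ℕ, 1 ≤ r →
      ∀ (E C : Type u) [CommRing E] [CommRing C] (e : A ⧸ I ^ r →+* E) (p : E →+* C),
        Function.Surjective p → IsNilpotent (RingHom.ker p) →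
          HasUniqueLift φ (e.comp (Ideal.Quotient.mk (I ^ r))) p := by
  constructor
  · rintro h r hr E C _ _ e p hp ⟨M, hM⟩ u hu
    have he : (I ^ r).map (e.comp (Ideal.Quotient.mk (I ^ r))) = ⊥ := by
      rw [← Ideal.map_map, Ideal.map_quotient_self, Ideal.map_bot]
    have hpe : (I ^ r).map (p.comp (e.comp (Ideal.Quotient.mk (I ^ r)))) = ⊥ := by
      rw [← Ideal.map_map, he, Ideal.map_bot]
    exact h E C _ _ p u rfl hu ⟨r, hr, he, hpe⟩ hp
      ⟨M + 1, M.succ_pos, pow_eq_zero_of_le M.le_succ hM⟩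
  · rintro h E C _ _ e c p u rfl hu ⟨r, hr, he, -⟩ hp ⟨M, -, hM⟩
    have hker : I ^ r ≤ RingHom.ker e := (Ideal.map_eq_bot_iff_le_ker e).1 he
    obtain ⟨e, rfl⟩ : ∃ e' : A ⧸ I ^ r →+* E, e'.comp (Ideal.Quotient.mk (I ^ r)) = e :=
      ⟨Ideal.Quotient.lift _ e hker, Ideal.Quotient.lift_comp_mk _ e hker⟩
    exact h r hr E C e p hp ⟨M, hM⟩ u hu

theorem isHFormallyEtale_iff_formallyEtale_mod_powers :
    IsHFormallyEtale φ I ↔ ∀ r : ℕ, 1 ≤ r →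
      (Ideal.quotientMap ((I ^ r).map φ) φ Ideal.le_comap_map :
        A ⧸ I ^ r →+* B ⧸ (I ^ r).map φ).FormallyEtale := by
  simp only [isHFormallyEtale_iff_hasUniqueLift, formallyEtale_iff_hasUniqueLift,
    hasUniqueLift_quotientMap_iff]

end HFormallyEtale

theorem isAdicComplete_of_isNilpotent {R M : Type*} [CommRing R] [AddCommGroup M] [Module R M]
    {J : Ideal R} (hJ : IsNilpotent J) : IsAdicComplete J M := by
  obtain ⟨n, hn⟩ := hJ
  have eq_of_smodEq {x y : M} (h : x ≡ y [SMOD (J ^ n • ⊤ : Submodule R M)]) : x = y := by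
    rwa [hn, Submodule.zero_eq_bot, Submodule.bot_smul, SModEq.bot] at h
  exact
    { haus' := fun x hx ↦ eq_of_smodEq (hx n)
      prec' := fun f hf ↦ ⟨f n, fun m ↦ by
        obtain hmn | hnm := le_total m n
        · exact hf hmn
        · rw [eq_of_smodEq (hf hnm)]⟩ }

theorem henselianRing_of_isNilpotent {R : Type*} [CommRing R] {J : Ideal R} (hJ : IsNilpotent J) :
    HenselianRing R J :=
  have : IsAdicComplete J R := isAdicComplete_of_isNilpotent hJ
  inferInstance

theorem henselianRing_map_of_pow_le_ker {R S : Type*} [CommRing R] [CommRing S] {K : Ideal R}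
    {f : R →+* S} {n : ℕ} (h : K ^ n ≤ RingHom.ker f) : HenselianRing S (K.map f) :=
  henselianRing_of_isNilpotent ⟨n, by rwa [← Ideal.map_pow, Ideal.zero_eq_bot,
    Ideal.map_eq_bot_iff_le_ker]⟩

theorem IsHenselization.bijective_quotientMap {R H : Type u} [CommRing R] [CommRing H]
    {K L : Ideal R} {ρ : R →+* H} (hρ : IsHenselization K ρ) {n : ℕ} (hKL : K ^ n ≤ L) :
    Function.Bijective
      (Ideal.quotientMap (L.map ρ) ρ Ideal.le_comap_map : R ⧸ L →+* H ⧸ L.map ρ) := by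
  set ρL : R ⧸ L →+* H ⧸ L.map ρ := Ideal.quotientMap (L.map ρ) ρ Ideal.le_comap_map
  have hρL : ρL.comp (Ideal.Quotient.mk L) = (Ideal.Quotient.mk (L.map ρ)).comp ρ :=
    Ideal.quotientMap_comp_mk Ideal.le_comap_map
  have existsUnique_lift {S : Type u} [CommRing S] (f : R →+* S) (hf : L ≤ RingHom.ker f) :
      ∃! g : H →+* S, g.comp ρ = f :=
    hρ.2 S (K.map f) (henselianRing_map_of_pow_le_ker (hKL.trans hf)) f le_rfl
  obtain ⟨g, hg, -⟩ := existsUnique_lift (Ideal.Quotient.mk L) Ideal.mk_ker.ge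
  obtain ⟨σ, rfl⟩ := exists_comp_mk_eq_of_comp_eq (e := RingHom.id (R ⧸ L)) hg
  have hσρ : σ.comp ρL = RingHom.id _ := comp_quotientMap_eq_iff.2 hg
  have hρσ : ρL.comp σ = RingHom.id _ := by
    refine Ideal.Quotient.ringHom_ext ((existsUnique_lift (ρL.comp (Ideal.Quotient.mk L)) ?_).unique
      ?_ ?_)
    · rw [← RingHom.comap_ker, ← Ideal.map_le_iff_le_comap, Ideal.map_quotient_self]
      exact bot_le
    · rw [RingHom.comp_assoc, RingHom.comp_assoc, ← RingHom.comp_assoc _ _ σ, hg]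
    · rw [RingHom.id_comp, hρL]
  exact Function.bijective_iff_has_inverse.2
    ⟨σ, RingHom.congr_fun hσρ, RingHom.congr_fun hρσ⟩

theorem finitePresentation_quotientMap {A R : Type*} [CommRing A] [CommRing R] {ψ : A →+* R}
    (hψ : ψ.FinitePresentation) (K : Ideal A) :
    (Ideal.quotientMap (K.map ψ) ψ Ideal.le_comap_map :
      A ⧸ K →+* R ⧸ K.map ψ).FinitePresentation := by
  algebraize [ψ]
  exact RingHom.finitePresentation_algebraMap.2
    (.equiv (Algebra.TensorProduct.quotIdealMapEquivQuotTensor R K).symm)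

theorem IsHfp.finitePresentation_mod_pow {A B : Type u} [CommRing A] [CommRing B] {φ : A →+* B}
    {I : Ideal A} (hφ : IsHfp φ I) (r : ℕ) :
    (Ideal.quotientMap ((I ^ r).map φ) φ Ideal.le_comap_map :
      A ⧸ I ^ r →+* B ⧸ (I ^ r).map φ).FinitePresentation := by
  obtain ⟨R, _, ψ, ρ, hψ, rfl, hρ⟩ := hφ
  -- `I^r B` and `(I^r R) B` are not definitionally equal, so the ideal is generalized first.
  suffices ∀ (J : Ideal B) (hJ : I ^ r ≤ J.comap (ρ.comp ψ)), J = ((I ^ r).map ψ).map ρ →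
      (Ideal.quotientMap J (ρ.comp ψ) hJ).FinitePresentation from
    this _ _ (Ideal.map_map ψ ρ).symm
  rintro _ hJ rfl
  have hbij := hρ.bijective_quotientMap (Ideal.map_pow ψ I r).ge
  have hcomp : Ideal.quotientMap (((I ^ r).map ψ).map ρ) (ρ.comp ψ) hJ =
      (Ideal.quotientMap (((I ^ r).map ψ).map ρ) ρ Ideal.le_comap_map).comp
        (Ideal.quotientMap ((I ^ r).map ψ) ψ Ideal.le_comap_map) :=
    Ideal.Quotient.ringHom_ext rfl
  rw [hcomp]
  exact (RingHom.FinitePresentation.of_bijective hbij).comp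
    (finitePresentation_quotientMap hψ (I ^ r))

theorem ringHomEtale_iff_formallyEtale_and_finitePresentation {A B : Type u} [CommRing A]
    [CommRing B] {φ : A →+* B} :
    RingHomEtale φ ↔ φ.FormallyEtale ∧ φ.FinitePresentation :=
  letI := φ.toAlgebra
  Algebra.etale_iff A B

theorem isHFormallyEtale_iff_etale_mod_powers_general
    {A B : Type u} [CommRing A] [CommRing B] {φ : A →+* B} {I : Ideal A} (hhfp : IsHfp φ I) :
    IsHFormallyEtale φ I ↔
      ∀ r : ℕ, 1 ≤ r →
        RingHomEtale (Ideal.quotientMap ((I ^ r).map φ) φ Ideal.le_comap_map :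
          A ⧸ I ^ r →+* B ⧸ (I ^ r).map φ) := by
  simp only [isHFormallyEtale_iff_formallyEtale_mod_powers,
    ringHomEtale_iff_formallyEtale_and_finitePresentation, hhfp.finitePresentation_mod_pow,
    and_true]

/-- For `B` hfp over the Henselian pair `(A, I)`, the map `A → B` is h-formally étale iff
`A/I^r → B/I^r·B` is étale for all `r ≥ 1`. -/
theorem isHFormallyEtale_iff_etale_mod_powers
    {A B : Type u} [CommRing A] [CommRing B] [Algebra A B]
    (I : Ideal A) [HenselianRing A I]
    (hhfp : IsHfp (algebraMap A B) I) :
    IsHFormallyEtale (algebraMap A B) I ↔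
      ∀ r : ℕ, 1 ≤ r →
        RingHomEtale (Ideal.quotientMap ((I ^ r).map (algebraMap A B)) (algebraMap A B)
          Ideal.le_comap_map) :=
  isHFormallyEtale_iff_etale_mod_powers_general hhfp
end

section
/- Structure of h-formally étale hfp algebras: let (A, I) be a Henselian pair and let B be an A-algebra which is hfp over A with respect to I and such that A → B is h-formally étale. Then there exist an étale A-algebra R, an A-algebra H together with an A-algebra homomorphism R → H exhibiting H as a Henselization of the pair (R, I·R), and a finitely generated ideal J of H with J ⊆ ⋂_{r ≥ 1} I^r·H, such that B is isomorphic as an A-algebra to H/J. -/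
universe u

/-! A pair `(B, J)` is Henselian if and only if every equation `p(y) = y` with `p ∈ J[X]` has a
solution, and the solution is then unique. In this form the Henselian property passes to quotients
and products, and among the subalgebras of a Henselian algebra which have it there is a smallest
one, generated by solving such equations; inside a product of all small Henselian algebras this
smallest one is the Henselization.

Let `B` be the Henselization of a finitely presented `S = P / K`, where `P = A[X₁, …, Xₙ]`. By the
universal property of the Henselization `S` is again h-formally étale, so the map
`S → S / IS = P / (K + IP)` lifts to `P / (K² + IP)`. The displacement of the variables under this
lift is a family `g₁, …, gₙ` in `K` which generates `K` modulo `K² + IP` and whose Jacobian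
determinant, by uniqueness of lifts to dual numbers, is `1` modulo `K + IP`. Nakayama's lemma turns
this into an étale `A`-algebra `R`, a localization of `P / (g)`, which surjects onto a localization
`S[1/s]` with `s ≡ 1` modulo `IS` and with kernel contained in `IR`. Lifting the identity of
`S[1/s]` through `R / IʳR` and comparing with `R → R / IʳR` by unramifiedness shows that the kernel
lies in every `IʳR`. Finally, `S` and `S[1/s]` have the same Henselization `B`, and Henselization
commutes with quotients. -/

universe v w

section FixedPoint

open Polynomial

variable {A : Type*} [CommRing A] {I : Ideal A}

theorem eval_mem_of_mem_map_C {p : A[X]} (hp : p ∈ I.map C) (x : A) : p.eval x ∈ I := by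
  have h : I.map C ≤ I.comap (evalRingHom x) := Ideal.map_le_iff_le_comap.2 fun a ha => by simpa
  exact h hp

theorem comp_mem_map_C {p : A[X]} (hp : p ∈ I.map C) (q : A[X]) : p.comp q ∈ I.map C := by
  have h : I.map C ≤ (I.map C).comap (compRingHom q) := Ideal.map_le_iff_le_comap.2 fun a ha => by
    simpa using Ideal.mem_map_of_mem C ha
  exact h hp

theorem derivative_mem_map_C {p : A[X]} (hp : p ∈ I.map C) : derivative p ∈ I.map C := by
  simp only [Ideal.mem_map_C_iff, coeff_derivative] at hp ⊢
  exact fun n => I.mul_mem_right _ (hp _)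

theorem divX_mem_map_C {p : A[X]} (hp : p ∈ I.map C) : divX p ∈ I.map C := by
  simp only [Ideal.mem_map_C_iff, coeff_divX] at hp ⊢
  exact fun n => hp _

theorem reverse_mem_map_C {p : A[X]} (hp : p ∈ I.map C) : reverse p ∈ I.map C := by
  simp only [Ideal.mem_map_C_iff, coeff_reverse] at hp ⊢
  exact fun n => hp _

theorem map_mem_map_C {B : Type*} [CommRing B] (f : A →+* B) {p : A[X]} (hp : p ∈ I.map C) :
    p.map f ∈ (I.map f).map C := by
  simp only [Ideal.mem_map_C_iff, coeff_map] at hp ⊢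
  exact fun n => Ideal.mem_map_of_mem f (hp n)

theorem exists_mem_eval_sub_eval_eq_mul {p : A[X]} (hp : p ∈ I.map C) (x y : A) :
    ∃ k ∈ I, p.eval x - p.eval y = (x - y) * k := by
  induction hp using Submodule.span_induction with
  | mem p hp =>
    obtain ⟨a, -, rfl⟩ := hp
    exact ⟨0, I.zero_mem, by simp⟩
  | zero => exact ⟨0, I.zero_mem, by simp⟩
  | add p q _ _ hp hq =>
    obtain ⟨k, hk, hpk⟩ := hp
    obtain ⟨l, hl, hql⟩ := hq
    exact ⟨k + l, I.add_mem hk hl, by rw [eval_add, eval_add]; linear_combination hpk + hql⟩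
  | smul q p hp hk =>
    obtain ⟨k, hk, hpk⟩ := hk
    obtain ⟨d, hd⟩ := sub_dvd_eval_sub x y q
    refine ⟨q.eval x * k + d * p.eval y, I.add_mem (I.mul_mem_left _ hk)
      (I.mul_mem_left _ (eval_mem_of_mem_map_C hp y)), ?_⟩
    rw [smul_eq_mul, eval_mul, eval_mul]
    linear_combination q.eval x * hpk + p.eval y * hd

theorem isUnit_one_sub_of_mem (hI : I ≤ Ideal.jacobson ⊥) {k : A} (hk : k ∈ I) :
    IsUnit (1 - k) := by
  have h := Ideal.mem_jacobson_bot.1 (hI hk) (-1)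
  rwa [mul_neg_one, neg_add_eq_sub] at h

theorem eq_of_eval_eq_self (hI : I ≤ Ideal.jacobson ⊥) {p : A[X]} (hp : p ∈ I.map C) {x y : A}
    (hx : p.eval x = x) (hy : p.eval y = y) : x = y := by
  obtain ⟨k, hk, h⟩ := exists_mem_eval_sub_eval_eq_mul hp x y
  have h0 : (x - y) * (1 - k) = 0 := by linear_combination h - hx + hy
  exact sub_eq_zero.1 ((isUnit_one_sub_of_mem hI hk).mul_left_eq_zero.1 h0)

/-- The monic polynomial to which Hensel's lemma applies is `X ^ (n + 1) - X ^ n + reverse r`: its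
roots near `1` are the inverses of the solutions of `z = 1 + z * r z`. -/
theorem exists_eq_one_add_mul_eval (hI : HenselianRing A I) {r : A[X]} (hr : r ∈ I.map C) :
    ∃ z : A, z = 1 + z * r.eval z := by
  let n := r.natDegree
  let G : A[X] := X ^ (n + 1) + (reverse r - X ^ n)
  have hrev := reverse_mem_map_C hr
  have hdeg : (reverse r - X ^ n).natDegree ≤ n :=
    (natDegree_sub_le_of_le (reverse_natDegree_le r) (natDegree_X_pow_le n)).trans (max_self n).le
  have hG : G.Monic := monic_X_pow_add <|
    degree_le_natDegree.trans_lt <| Nat.cast_lt.2 <| Nat.lt_succ_of_le hdeg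
  have hG1 : G.eval 1 ∈ I := by
    simpa [G] using eval_mem_of_mem_map_C hrev 1
  have hG1' : Ideal.Quotient.mk I (G.derivative.eval 1) = 1 := by
    have h := Ideal.Quotient.eq_zero_iff_mem.2
      (eval_mem_of_mem_map_C (derivative_mem_map_C hrev) 1)
    simp [G, derivative_X_pow, h]
  obtain ⟨w, hw, hw1⟩ := hI.is_henselian G hG 1 hG1 (by simp [hG1'])
  obtain ⟨w, rfl⟩ : IsUnit w := by
    simpa using isUnit_one_sub_of_mem hI.jac (neg_mem hw1)
  let _ : Invertible (↑w⁻¹ : A) := w⁻¹.invertible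
  have hrw : (reverse r).eval ↑w * ↑w⁻¹ ^ n = r.eval ↑w⁻¹ := by
    simpa using eval₂_reverse_mul_pow (RingHom.id A) (↑w⁻¹ : A) r
  have hww : (↑w : A) ^ n * ↑w⁻¹ ^ n = 1 := by rw [← mul_pow, w.mul_inv, one_pow]
  have hG0 : (↑w : A) ^ (n + 1) + ((reverse r).eval ↑w - ↑w ^ n) = 0 := by
    simpa [G] using hw
  refine ⟨↑w⁻¹, ?_⟩
  linear_combination (-(↑w⁻¹ : A) ^ (n + 1)) * hG0 + (↑w⁻¹ : A) * hrw +
    (↑w * ↑w⁻¹ - (↑w⁻¹ : A)) * hww + w.mul_inv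

theorem exists_eval_eq_self_of_henselianRing (hI : HenselianRing A I) {p : A[X]}
    (hp : p ∈ I.map C) : ∃ y : A, p.eval y = y := by
  let c := p.coeff 0
  obtain ⟨z, hz⟩ := exists_eq_one_add_mul_eval hI
    (comp_mem_map_C (divX_mem_map_C hp) (C c * X))
  have hpc : p.eval (c * z) = (divX p).eval (c * z) * (c * z) + c := by
    conv_lhs => rw [← divX_mul_X_add p]
    simp [c]
  refine ⟨c * z, ?_⟩
  simp only [eval_comp, eval_mul, eval_C, eval_X] at hz
  linear_combination hpc - c * hz

theorem le_jacobson_bot_of_forall_exists_eval_eq_self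
    (h : ∀ p ∈ I.map C, ∃ y : A, p.eval y = y) : I ≤ Ideal.jacobson ⊥ := by
  intro x hx
  rw [Ideal.mem_jacobson_bot]
  intro y
  obtain ⟨z, hz⟩ := h (C (-(x * y)) * (X + 1)) <|
    Ideal.mul_mem_right _ _ <| Ideal.mem_map_of_mem C <| neg_mem <| I.mul_mem_right y hx
  simp only [eval_mul, eval_C, eval_add, eval_X, eval_one] at hz
  exact IsUnit.of_mul_eq_one (1 + z) (by linear_combination -hz)

theorem exists_isRoot_of_forall_exists_eval_eq_self
    (h : ∀ p ∈ I.map C, ∃ y : A, p.eval y = y) {f : A[X]} {a : A} (ha : f.eval a ∈ I)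
    (hu : IsUnit (f.derivative.eval a)) : ∃ b, f.IsRoot b ∧ b - a ∈ I := by
  obtain ⟨u, hu⟩ := hu
  let s : A := ↑u⁻¹ * f.eval a
  let T := divX (divX (taylor a f))
  have hs : s ∈ I := I.mul_mem_left _ ha
  have htaylor (y : A) : f.eval (a + y) = (T.eval y * y + u) * y + u * s := by
    have h1 : (u : A) = (divX (taylor a f)).coeff 0 := by
      rw [coeff_divX, taylor_coeff_one, hu]
    have h0 : u * s = (taylor a f).coeff 0 := by rw [taylor_coeff_zero, u.mul_inv_cancel_left]
    rw [add_comm a, ← taylor_eval, h0, h1]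
    conv_lhs => rw [← divX_mul_X_add (taylor a f), ← divX_mul_X_add (divX (taylor a f))]
    simp [T]
  obtain ⟨z, hz⟩ := h (C (-↑u⁻¹ * s) * ((X - 1) ^ 2 * T.comp (C s * (X - 1)))) <|
    Ideal.mul_mem_right _ _ <| Ideal.mem_map_of_mem C <| I.mul_mem_left _ hs
  simp only [eval_mul, eval_C, eval_pow, eval_sub, eval_X, eval_one, eval_comp] at hz
  refine ⟨a + s * (z - 1), ?_, by simpa using I.mul_mem_right _ hs⟩
  rw [IsRoot, htaylor]
  linear_combination -(u * s) * hz - (s ^ 2 * (z - 1) ^ 2 * T.eval (s * (z - 1))) * u.mul_inv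

theorem henselianRing_iff_forall_exists_eval_eq_self :
    HenselianRing A I ↔ ∀ p ∈ I.map C, ∃ y : A, p.eval y = y where
  mp hI _ hp := exists_eval_eq_self_of_henselianRing hI hp
  mpr h :=
    have hjac := le_jacobson_bot_of_forall_exists_eval_eq_self h
    have := isLocalHom_of_le_jacobson_bot I hjac
    { jac := hjac
      is_henselian := fun _ _ _ ha hu =>
        exists_isRoot_of_forall_exists_eval_eq_self h ha (IsUnit.of_map _ _ hu) }

theorem henselianRing_of_le {J : Ideal A} (hI : HenselianRing A I) (hJ : J ≤ I) :
    HenselianRing A J :=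
  henselianRing_iff_forall_exists_eval_eq_self.2 fun _ hp =>
    exists_eval_eq_self_of_henselianRing hI (Ideal.map_mono hJ hp)

theorem henselianRing_of_pow_eq_bot {n : ℕ} (hI : I ^ n = ⊥) : HenselianRing A I := by
  refine henselianRing_iff_forall_exists_eval_eq_self.2 fun p hp => ?_
  suffices h : ∀ m, ∃ y, p.eval y - y ∈ I ^ m by
    obtain ⟨y, hy⟩ := h n
    exact ⟨y, sub_eq_zero.1 (by simpa [hI] using hy)⟩
  intro m
  induction m with
  | zero => exact ⟨0, by simp⟩
  | succ m ih =>
    obtain ⟨y, hy⟩ := ih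
    obtain ⟨k, hk, h⟩ := exists_mem_eval_sub_eval_eq_mul hp (p.eval y) y
    exact ⟨p.eval y, by rw [h, pow_succ]; exact Ideal.mul_mem_mul hy hk⟩

theorem henselianRing_pi {ι : Type*} {B : ι → Type*} [∀ i, CommRing (B i)]
    {J : Ideal (∀ i, B i)} (h : ∀ i, HenselianRing (B i) (J.map (Pi.evalRingHom B i))) :
    HenselianRing (∀ i, B i) J := by
  refine henselianRing_iff_forall_exists_eval_eq_self.2 fun p hp => ?_
  choose y hy using fun i =>
    exists_eval_eq_self_of_henselianRing (h i) (map_mem_map_C (Pi.evalRingHom B i) hp)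
  refine ⟨y, funext fun i => ?_⟩
  rw [← hy i]
  exact (eval_map_apply (Pi.evalRingHom B i) y).symm

theorem henselianRing_map_of_surjective {B : Type*} [CommRing B] (hI : HenselianRing A I)
    {f : A →+* B} (hf : Function.Surjective f) : HenselianRing B (I.map f) := by
  refine henselianRing_iff_forall_exists_eval_eq_self.2 fun p hp => ?_
  have hmap : (I.map f).map (C : B →+* B[X]) = (I.map C).map (mapRingHom f) := by
    rw [Ideal.map_map, Ideal.map_map, mapRingHom_comp_C]
  rw [hmap, Ideal.mem_map_iff_of_surjective _ (map_surjective f hf)] at hp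
  obtain ⟨q, hq, rfl⟩ := hp
  obtain ⟨y, hy⟩ := exists_eval_eq_self_of_henselianRing hI hq
  exact ⟨f y, by rw [coe_mapRingHom, eval_map_apply, hy]⟩

theorem exists_eval_eq_self_of_map_eval_eq_self {B : Type*} [CommRing B] (hI : HenselianRing A I)
    {f : A →+* B} (hf : I.map f ≤ Ideal.jacobson ⊥) {p : A[X]} (hp : p ∈ I.map C) {y : B}
    (hy : (p.map f).eval y = y) : ∃ x : A, p.eval x = x ∧ f x = y := by
  obtain ⟨x, hx⟩ := exists_eval_eq_self_of_henselianRing hI hp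
  refine ⟨x, hx, eq_of_eval_eq_self hf (map_mem_map_C f hp) ?_ hy⟩
  rw [eval_map_apply, hx]

end FixedPoint

section HenselianAlgebra

open Polynomial

variable {R : Type u} {B : Type v} {D : Type w} [CommRing R] [CommRing B] [CommRing D]
  [Algebra R B] [Algebra R D] {K : Ideal R}

theorem map_algHom_mem_map_C (f : B →ₐ[R] D) {p : B[X]}
    (hp : p ∈ (K.map (algebraMap R B)).map C) :
    p.map (f : B →+* D) ∈ (K.map (algebraMap R D)).map C := by
  have h := map_mem_map_C (f : B →+* D) hp
  rwa [Ideal.map_map (f := algebraMap R B), AlgHom.comp_algebraMap] at h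

/-- An `R`-algebra `B` is Henselian with respect to an ideal `K` of `R` if `(B, K·B)` is a
Henselian pair. -/
abbrev IsHenselianAlgebra (K : Ideal R) (B : Type v) [CommRing B] [Algebra R B] : Prop :=
  HenselianRing B (K.map (algebraMap R B))

namespace IsHenselianAlgebra

theorem of_surjective (hB : IsHenselianAlgebra K B) {f : B →ₐ[R] D} (hf : Function.Surjective f) :
    IsHenselianAlgebra K D := by
  have h := henselianRing_map_of_surjective hB (f := f.toRingHom) hf
  rwa [Ideal.map_map, AlgHom.toRingHom_eq_coe, AlgHom.comp_algebraMap] at h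

theorem pi {ι : Type*} {E : ι → Type*} [∀ i, CommRing (E i)] [∀ i, Algebra R (E i)]
    (h : ∀ i, IsHenselianAlgebra K (E i)) : IsHenselianAlgebra K (∀ i, E i) :=
  henselianRing_pi fun i => by
    rw [Ideal.map_map]
    exact h i

theorem subalgebra (hB : IsHenselianAlgebra K B) {S : Subalgebra R B}
    (hS : ∀ p ∈ (K.map (algebraMap R S)).map C, ∀ y : B,
      (p.map (S.val : S →+* B)).eval y = y → y ∈ S) :
    IsHenselianAlgebra K S := by
  refine henselianRing_iff_forall_exists_eval_eq_self.2 fun p hp => ?_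
  obtain ⟨y, hy⟩ := exists_eval_eq_self_of_henselianRing hB (map_algHom_mem_map_C S.val hp)
  refine ⟨⟨y, hS p hp y hy⟩, Subtype.ext ?_⟩
  exact (eval_map_apply (S.val : S →+* B) ⟨y, hS p hp y hy⟩).symm.trans hy

theorem mem_range_of_eval_map_eq_self (hB : IsHenselianAlgebra K B) {f : B →ₐ[R] D}
    (hD : K.map (algebraMap R D) ≤ Ideal.jacobson ⊥) {p : B[X]}
    (hp : p ∈ (K.map (algebraMap R B)).map C) {y : D}
    (hy : (p.map (f : B →+* D)).eval y = y) : y ∈ f.range := by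
  have hf : (K.map (algebraMap R B)).map (f : B →+* D) ≤ Ideal.jacobson ⊥ := by
    rwa [Ideal.map_map, AlgHom.comp_algebraMap]
  obtain ⟨x, -, hx⟩ := exists_eval_eq_self_of_map_eval_eq_self hB hf hp hy
  exact ⟨x, hx⟩

theorem sInf_subalgebra (hB : IsHenselianAlgebra K B) {s : Set (Subalgebra R B)}
    (hs : ∀ S ∈ s, IsHenselianAlgebra K S) : IsHenselianAlgebra K (sInf s : Subalgebra R B) := by
  refine hB.subalgebra fun p hp y hy => Algebra.mem_sInf.2 fun S hS => ?_
  have hle := sInf_le hS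
  have hpS := map_algHom_mem_map_C (Subalgebra.inclusion hle) hp
  rw [← S.range_val]
  refine (hs S hS).mem_range_of_eval_map_eq_self hB.jac hpS ?_
  rw [Polynomial.map_map]
  exact hy

theorem equalizer (hB : IsHenselianAlgebra K B) (hD : K.map (algebraMap R D) ≤ Ideal.jacobson ⊥)
    (f g : B →ₐ[R] D) : IsHenselianAlgebra K (AlgHom.equalizer f g) := by
  refine hB.subalgebra fun p hp y hy => ?_
  let i : AlgHom.equalizer f g →ₐ[R] B := (AlgHom.equalizer f g).val
  have hfg : g.comp i = f.comp i := AlgHom.ext fun x => x.2.symm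
  have hpD := map_algHom_mem_map_C (f.comp i) hp
  have hfix (h : B →ₐ[R] D) : (p.map (h.comp i : _ →+* D)).eval (h y) = h y := by
    have := congrArg h hy
    rw [← AlgHom.coe_toRingHom, ← eval_map_apply, Polynomial.map_map] at this
    exact this
  exact eq_of_eval_eq_self hD hpD (hfix f) (hfg ▸ hfix g)

end IsHenselianAlgebra

/-- The smallest `R`-subalgebra of `B` that is Henselian with respect to `K`. -/
def henselClosure (K : Ideal R) (B : Type v) [CommRing B] [Algebra R B] : Subalgebra R B :=
  sInf {S | IsHenselianAlgebra K S}

theorem isHenselianAlgebra_henselClosure (hB : IsHenselianAlgebra K B) :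
    IsHenselianAlgebra K (henselClosure K B) :=
  hB.sInf_subalgebra fun _ hS => hS

theorem henselClosure_le {S : Subalgebra R B} (hS : IsHenselianAlgebra K S) :
    henselClosure K B ≤ S :=
  sInf_le hS

theorem henselClosure_algHom_ext (hB : IsHenselianAlgebra K B)
    (hD : K.map (algebraMap R D) ≤ Ideal.jacobson ⊥) (f g : henselClosure K B →ₐ[R] D) :
    f = g := by
  let ι := (henselClosure K B).val
  let S := AlgHom.equalizer f g
  have hS : IsHenselianAlgebra K S := (isHenselianAlgebra_henselClosure hB).equalizer hD f g
  have hSι : IsHenselianAlgebra K (S.map ι) :=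
    hS.of_surjective (f := (S.equivMapOfInjective ι Subtype.val_injective : S →ₐ[R] S.map ι))
      (S.equivMapOfInjective ι Subtype.val_injective).surjective
  ext x
  obtain ⟨y, hy, hyx⟩ := henselClosure_le hSι x.2
  rwa [← Subtype.ext hyx]

/-- Terms of the language of `R`-algebras with an additional operation `fix` that solves the
equation `∑ i, c i * y ^ i = y`. They bound the size of `henselClosure`. -/
inductive HenselTerm (R : Type u) : Type u
  | of (r : R)
  | add (s t : HenselTerm R)
  | mul (s t : HenselTerm R)
  | fix (n : ℕ) (c : Fin n → HenselTerm R)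

namespace HenselTerm

/-- The value of a term in an `R`-algebra `B`. The value of `fix n c` is an arbitrary solution of
the equation, and a junk value if there is none. -/
noncomputable def eval (B : Type v) [CommRing B] [Algebra R B] : HenselTerm R → B
  | of r => algebraMap R B r
  | add s t => s.eval B + t.eval B
  | mul s t => s.eval B * t.eval B
  | fix _ c => Classical.epsilon fun y => ∑ i, (c i).eval B * y ^ (i : ℕ) = y

/-- The subalgebra of values of terms. -/
def evalRange (R : Type u) (B : Type v) [CommRing R] [CommRing B] [Algebra R B] :
    Subalgebra R B where
  carrier := Set.range (eval (R := R) B)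
  add_mem' := by
    rintro _ _ ⟨s, rfl⟩ ⟨t, rfl⟩
    exact ⟨add s t, rfl⟩
  mul_mem' := by
    rintro _ _ ⟨s, rfl⟩ ⟨t, rfl⟩
    exact ⟨mul s t, rfl⟩
  algebraMap_mem' r := ⟨of r, rfl⟩

theorem isHenselianAlgebra_evalRange (hB : IsHenselianAlgebra K B) :
    IsHenselianAlgebra K (evalRange R B) := by
  refine hB.subalgebra fun p hp y hy => ?_
  let q := p.map ((evalRange R B).val : _ →+* B)
  have hq : q ∈ (K.map (algebraMap R B)).map C := map_algHom_mem_map_C (evalRange R B).val hp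
  choose c hc using fun n => (p.coeff n).2
  have hsum (z : B) : ∑ i : Fin (q.natDegree + 1), (c i).eval B * z ^ (i : ℕ) = q.eval z := by
    rw [eval_eq_sum_range, Finset.sum_range]
    refine Finset.sum_congr rfl fun i _ => ?_
    rw [hc, coeff_map]
    rfl
  refine ⟨fix (q.natDegree + 1) fun i => c i, eq_of_eval_eq_self hB.jac hq ?_ hy⟩
  have h := Classical.epsilon_spec
    (p := fun z : B => ∑ i : Fin (q.natDegree + 1), (c i).eval B * z ^ (i : ℕ) = z)
    ⟨y, (hsum y).trans hy⟩
  rw [← hsum]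
  exact h

end HenselTerm

theorem small_henselClosure (hB : IsHenselianAlgebra K B) : Small.{u} (henselClosure K B) := by
  have : Small.{u} (HenselTerm.evalRange R B) := small_range (HenselTerm.eval (R := R) B)
  exact small_subset (henselClosure_le (HenselTerm.isHenselianAlgebra_evalRange hB))

theorem exists_isHenselization (R : Type u) [CommRing R] (K : Ideal R) :
    ∃ (H : Type u) (_ : CommRing H) (ρ : R →+* H), IsHenselization K ρ := by
  let ι := {B : CommAlgCat.{u} R // IsHenselianAlgebra K B}
  let Ω := ∀ i : ι, i.1
  have hΩ : IsHenselianAlgebra K Ω := IsHenselianAlgebra.pi fun i => i.2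
  have := small_henselClosure hΩ
  let H := Shrink.{u} (henselClosure K Ω)
  let e : H ≃ₐ[R] henselClosure K Ω := Shrink.algEquiv R _
  have hH : IsHenselianAlgebra K H :=
    (isHenselianAlgebra_henselClosure hΩ).of_surjective (f := (e.symm : _ →ₐ[R] H))
      e.symm.surjective
  refine ⟨H, inferInstance, algebraMap R H, hH, fun B _ J hJ f hf => ?_⟩
  let _ := f.toAlgebra
  have hB : IsHenselianAlgebra K B := henselianRing_of_le hJ hf
  let π : Ω →ₐ[R] B := Pi.evalAlgHom R (fun i : ι => i.1) ⟨CommAlgCat.of R B, hB⟩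
  let g : H →ₐ[R] B := (π.comp (henselClosure K Ω).val).comp e
  refine ⟨g, g.comp_algebraMap, fun g' hg' => ?_⟩
  let γ : H →ₐ[R] B := { g' with commutes' := fun r => congr($hg' r) }
  have h := henselClosure_algHom_ext hΩ hB.jac (γ.comp e.symm) (g.comp e.symm)
  ext x
  simpa [γ] using congr($h (e x))

end HenselianAlgebra

namespace IsHenselization

variable {R H : Type u} [CommRing R] [CommRing H] {K : Ideal R} {ρ : R →+* H}

theorem hom_ext (hρ : IsHenselization K ρ) {C : Type u} [CommRing C] {J : Ideal C}
    (hJ : HenselianRing C J) {g g' : H →+* C} (hgJ : K.map (g.comp ρ) ≤ J)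
    (h : g.comp ρ = g'.comp ρ) : g = g' :=
  (hρ.2 C J hJ (g.comp ρ) hgJ).unique rfl h.symm

theorem exists_ringEquiv (hρ : IsHenselization K ρ) {H' : Type u} [CommRing H'] {ρ' : R →+* H'}
    (hρ' : IsHenselization K ρ') : ∃ e : H ≃+* H', (e : H →+* H').comp ρ = ρ' := by
  obtain ⟨f, hf, -⟩ := hρ.2 H' _ hρ'.1 ρ' le_rfl
  obtain ⟨g, hg, -⟩ := hρ'.2 H _ hρ.1 ρ le_rfl
  have hgf : (g.comp f).comp ρ = ρ := by rw [RingHom.comp_assoc, hf, hg]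
  have hfg : (f.comp g).comp ρ' = ρ' := by rw [RingHom.comp_assoc, hg, hf]
  exact ⟨RingEquiv.ofRingHom f g (hρ'.hom_ext hρ'.1 (by rw [hfg]) hfg)
    (hρ.hom_ext hρ.1 (by rw [hgf]) hgf), hf⟩

theorem exists_away (hρ : IsHenselization K ρ) {s : R} (hs : s - 1 ∈ K) (S : Type u) [CommRing S]
    [Algebra R S] [IsLocalization.Away s S] :
    ∃ j : S →+* H, j.comp (algebraMap R S) = ρ ∧ IsHenselization (K.map (algebraMap R S)) j := by
  have hu : IsUnit (ρ s) := by
    have h := isUnit_one_sub_of_mem hρ.1.jac (neg_mem (Ideal.mem_map_of_mem ρ hs))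
    simpa using h
  let j : S →+* H := IsLocalization.Away.lift s hu
  have hj : j.comp (algebraMap R S) = ρ := IsLocalization.Away.lift_comp s hu
  refine ⟨j, hj, by rw [Ideal.map_map, hj]; exact hρ.1, fun C _ J hJ f hf => ?_⟩
  rw [Ideal.map_map] at hf
  obtain ⟨g, hg, hg'⟩ := hρ.2 C J hJ (f.comp (algebraMap R S)) hf
  refine ⟨g, IsLocalization.ringHom_ext (Submonoid.powers s) ?_, fun g' h => hg' g' ?_⟩
  · rw [RingHom.comp_assoc, hj, hg]
  · rw [← h, RingHom.comp_assoc, hj]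

theorem exists_quotient (hρ : IsHenselization K ρ) {S : Type u} [CommRing S] {φ : R →+* S}
    (hφ : Function.Surjective φ) :
    ∃ ρ' : S →+* H ⧸ (RingHom.ker φ).map ρ,
      ρ'.comp φ = (Ideal.Quotient.mk _).comp ρ ∧ IsHenselization (K.map φ) ρ' := by
  let J := (RingHom.ker φ).map ρ
  let π : H →+* H ⧸ J := Ideal.Quotient.mk J
  let ρ' : S →+* H ⧸ J := RingHom.liftOfSurjective φ hφ ⟨π.comp ρ, fun x hx =>
    Ideal.Quotient.eq_zero_iff_mem.2 (Ideal.mem_map_of_mem ρ hx)⟩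
  have hρ' : ρ'.comp φ = π.comp ρ := RingHom.liftOfRightInverse_comp φ _ _ _
  refine ⟨ρ', hρ', ?_, fun C _ I hI f hf => ?_⟩
  · rw [Ideal.map_map, hρ', ← Ideal.map_map]
    exact henselianRing_map_of_surjective hρ.1 Ideal.Quotient.mk_surjective
  · rw [Ideal.map_map] at hf
    obtain ⟨g, hg, hg'⟩ := hρ.2 C I hI (f.comp φ) hf
    have hJ : J ≤ RingHom.ker g := Ideal.map_le_iff_le_comap.2 fun x (hx : φ x = 0) => by
      rw [Ideal.mem_comap, RingHom.mem_ker, ← RingHom.comp_apply, hg, RingHom.comp_apply, hx,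
        map_zero]
    refine ⟨Ideal.Quotient.lift J g fun x hx => hJ hx, (RingHom.cancel_right hφ).1 ?_,
      fun g' h => Ideal.Quotient.ringHom_ext (hg' _ ?_)⟩
    · rw [RingHom.comp_assoc, hρ', ← hg]
      rfl
    · change (g'.comp π).comp ρ = f.comp φ
      rw [RingHom.comp_assoc, ← hρ', ← RingHom.comp_assoc, h]

theorem exists_ringEquiv_quotient (hρ : IsHenselization K ρ) {S B : Type u} [CommRing S]
    [CommRing B] {φ : R →+* S} (hφ : Function.Surjective φ) {j : S →+* B}
    (hj : IsHenselization (K.map φ) j) :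
    ∃ e : H ⧸ (RingHom.ker φ).map ρ ≃+* B,
      (e : H ⧸ (RingHom.ker φ).map ρ →+* B).comp ((Ideal.Quotient.mk _).comp ρ) = j.comp φ := by
  obtain ⟨ρ', hρ'φ, hρ'⟩ := hρ.exists_quotient hφ
  obtain ⟨e, rfl⟩ := hρ'.exists_ringEquiv hj
  exact ⟨e, by rw [← hρ'φ, RingHom.comp_assoc]⟩

theorem isHFormallyEtale {A B : Type u} [CommRing A] [CommRing B] {I : Ideal A} {ψ : A →+* R}
    {ρ : R →+* B} (hρ : IsHenselization (I.map ψ) ρ) (hB : IsHFormallyEtale (ρ.comp ψ) I) :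
    IsHFormallyEtale ψ I := by
  rintro E C _ _ e c p u hpe huc ⟨N, hN, hE, hC⟩ hp hker
  have hHE : HenselianRing E (I.map e) :=
    henselianRing_of_pow_eq_bot (n := N) (by rwa [← Ideal.map_pow])
  have hHC : HenselianRing C (I.map c) :=
    henselianRing_of_pow_eq_bot (n := N) (by rwa [← Ideal.map_pow])
  obtain ⟨u', rfl, -⟩ := hρ.2 C _ hHC u (by rw [Ideal.map_map, huc])
  obtain ⟨v, ⟨hve, hvu⟩, hv⟩ := hB E C e c p u' hpe huc ⟨N, hN, hE, hC⟩ hp hker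
  refine ⟨v.comp ρ, ⟨hve, by rw [← RingHom.comp_assoc, hvu]⟩, fun w ⟨hwe, hwu⟩ => ?_⟩
  obtain ⟨w', rfl, -⟩ := hρ.2 E _ hHE w (by rw [Ideal.map_map, hwe])
  rw [hv w' ⟨hwe, hρ.hom_ext hHC ?_ hwu⟩]
  rw [Ideal.map_map, RingHom.comp_assoc, RingHom.comp_assoc, ← RingHom.comp_assoc ψ, hwe, hpe]

end IsHenselization

section HFormallyEtale

variable {A B : Type u} [CommRing A] [CommRing B] [Algebra A B] {I : Ideal A}

theorem IsHFormallyEtale.existsUnique_algHom (hB : IsHFormallyEtale (algebraMap A B) I)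
    {E C : Type u} [CommRing E] [CommRing C] [Algebra A E] [Algebra A C] {N : ℕ}
    (hE : I.map (algebraMap A E) ^ N = ⊥) (p : E →ₐ[A] C) (hp : Function.Surjective p) {M : ℕ}
    (hM : RingHom.ker p ^ M = ⊥) (u : B →ₐ[A] C) : ∃! v : B →ₐ[A] E, p.comp v = u := by
  have hE' : Ideal.map (algebraMap A E) (I ^ (N + 1)) = ⊥ := by
    rw [Ideal.map_pow, pow_succ, hE, Ideal.bot_mul]
  have hC' : Ideal.map (algebraMap A C) (I ^ (N + 1)) = ⊥ := by
    rw [← p.comp_algebraMap, ← Ideal.map_map, hE', Ideal.map_bot]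
  have hM' : RingHom.ker p ^ (M + 1) = ⊥ := by rw [pow_succ, hM, Ideal.bot_mul]
  obtain ⟨v, ⟨hv, hpv⟩, hvu⟩ := hB E C (algebraMap A E) (algebraMap A C) p u p.comp_algebraMap
    u.comp_algebraMap ⟨N + 1, by lia, hE', hC'⟩ hp ⟨M + 1, by lia, hM'⟩
  refine ⟨⟨v, fun a => congr($hv a)⟩, AlgHom.ext fun b => congr($hpv b), fun w hw => ?_⟩
  have h := hvu w ⟨w.comp_algebraMap, congr(($hw : B →+* C))⟩
  exact AlgHom.ext fun b => congr($h b)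

theorem IsHFormallyEtale.exists_algHom_quotient (hB : IsHFormallyEtale (algebraMap A B) I)
    {P : Type u} [CommRing P] [Algebra A P] {f : P →ₐ[A] B} (hf : Function.Surjective f)
    {L M : Ideal P} {N k : ℕ} (hL : I.map (algebraMap A P) ^ N ≤ L) (hM : M ^ k ≤ L)
    (hfM : RingHom.ker f ≤ M) : ∃ v : B →ₐ[A] P ⧸ L,
      ∀ x, v (f x) - Ideal.Quotient.mk L x ∈ M.map (Ideal.Quotient.mk L) := by
  have map_eq_bot {J : Ideal P} (hJ : J ≤ L) : J.map (Ideal.Quotient.mk L) = ⊥ := by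
    rwa [Ideal.map_eq_bot_iff_le_ker, Ideal.mk_ker]
  have hE : I.map (algebraMap A (P ⧸ L)) ^ N = ⊥ := by
    rw [← map_eq_bot hL, Ideal.map_pow, Ideal.map_map]; rfl
  let p := Ideal.Quotient.mkₐ A (M.map (Ideal.Quotient.mk L))
  have hp : RingHom.ker p ^ k = ⊥ := by
    rw [show RingHom.ker p = M.map (Ideal.Quotient.mk L) from Ideal.Quotient.mkₐ_ker A _,
      ← Ideal.map_pow, map_eq_bot hM]
  have hker : RingHom.ker f ≤ RingHom.ker (p.comp (Ideal.Quotient.mkₐ A L)) := fun x hx =>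
    Ideal.Quotient.eq_zero_iff_mem.2 (Ideal.mem_map_of_mem _ (hfM hx))
  obtain ⟨v, hv, -⟩ := hB.existsUnique_algHom hE p (Ideal.Quotient.mkₐ_surjective A _) hp
    (AlgHom.liftOfSurjective f hf _ hker)
  refine ⟨v, fun x => Ideal.Quotient.eq.1 ?_⟩
  exact congr($hv (f x)).trans (AlgHom.liftOfSurjective_apply f hf _ hker x)

theorem IsHFormallyEtale.snd_eq_zero (hB : IsHFormallyEtale (algebraMap A B) I) {S : Type u}
    [CommRing S] [Algebra A S] (hS : I.map (algebraMap A S) = ⊥) (v : B →ₐ[A] DualNumber S)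
    (b : B) : (v b).snd = 0 := by
  let ι : S →ₐ[A] DualNumber S := TrivSqZeroExt.inlAlgHom A S S
  let π : DualNumber S →ₐ[A] S := TrivSqZeroExt.fstHom A S S
  have hE : I.map (algebraMap A (DualNumber S)) ^ 1 = ⊥ := by
    rw [pow_one, ← ι.comp_algebraMap, ← Ideal.map_map, hS, Ideal.map_bot]
  have hπ : RingHom.ker π ^ 2 = ⊥ := TrivSqZeroExt.kerIdeal_sq S S
  have h : v = ι.comp (π.comp v) :=
    (hB.existsUnique_algHom hE π (fun s => ⟨ι s, rfl⟩) hπ (π.comp v)).unique rfl rfl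
  rw [h]
  exact TrivSqZeroExt.snd_inl S _

end HFormallyEtale

section Taylor

open MvPolynomial

theorem algHom_sub_eq_sum_pderiv_of_mul_eq_zero {A S σ : Type*} [CommRing A] [CommRing S]
    [Algebra A S] [Fintype σ] (φ ψ : MvPolynomial σ A →ₐ[A] S)
    (hmul : ∀ i j, (ψ (X i) - φ (X i)) * (ψ (X j) - φ (X j)) = 0) (p : MvPolynomial σ A) :
    ψ p - φ p = ∑ i, φ (pderiv i p) * (ψ (X i) - φ (X i)) := by
  classical
  induction p using MvPolynomial.induction_on with
  | C a => simp [← algebraMap_eq]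
  | add p q hp hq =>
    simp only [map_add, add_mul, Finset.sum_add_distrib, ← hp, ← hq]
    ring
  | mul_X p j hp =>
    have hj : (ψ p - φ p) * (ψ (X j) - φ (X j)) = 0 := by
      rw [hp, Finset.sum_mul]
      exact Finset.sum_eq_zero fun i _ => by rw [mul_assoc, hmul, mul_zero]
    have hX : ∑ i, φ (pderiv i (X j)) * (ψ (X i) - φ (X i)) = ψ (X j) - φ (X j) := by
      simp [pderiv_X, Pi.single_apply, apply_ite]
    simp only [Derivation.leibniz, smul_eq_mul, map_add, map_mul, add_mul, mul_assoc,
      Finset.sum_add_distrib, ← Finset.mul_sum, hX, ← hp]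
    linear_combination hj

theorem aeval_inl_add_inr {A S σ : Type*} [CommRing A] [CommRing S] [Algebra A S] [Fintype σ]
    (φ : MvPolynomial σ A →ₐ[A] S) (b : σ → S) (p : MvPolynomial σ A) :
    aeval (fun i => (TrivSqZeroExt.inl (φ (X i)) + TrivSqZeroExt.inr (b i) : DualNumber S)) p =
      TrivSqZeroExt.inl (φ p) + TrivSqZeroExt.inr (∑ i, φ (pderiv i p) * b i) := by
  let ψ : MvPolynomial σ A →ₐ[A] DualNumber S := aeval fun i =>
    TrivSqZeroExt.inl (φ (X i)) + TrivSqZeroExt.inr (b i)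
  let φ' : MvPolynomial σ A →ₐ[A] DualNumber S := (TrivSqZeroExt.inlAlgHom A S S).comp φ
  have hψ (i) : ψ (X i) - φ' (X i) = TrivSqZeroExt.inr (b i) := by simp [ψ, φ']
  have h := algHom_sub_eq_sum_pderiv_of_mul_eq_zero (S := DualNumber S) φ' ψ
    (fun i j => by rw [hψ, hψ, TrivSqZeroExt.inr_mul_inr]) p
  rw [TrivSqZeroExt.inr_sum]
  refine (sub_eq_iff_eq_add'.1 h).trans congr(_ + $(Finset.sum_congr rfl fun i _ => ?_))
  rw [hψ]
  exact TrivSqZeroExt.inl_mul_inr _ _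

theorem derivation_mem_of_mem_sq_sup_map {A P : Type*} [CommRing A] [CommRing P] [Algebra A P]
    (D : Derivation A P P) {K : Ideal P} {I : Ideal A} {x : P}
    (hx : x ∈ K ^ 2 ⊔ I.map (algebraMap A P)) : D x ∈ K ⊔ I.map (algebraMap A P) := by
  obtain ⟨y, hy, z, hz, rfl⟩ := Submodule.mem_sup.1 hx
  clear hx
  rw [map_add]
  refine add_mem (Ideal.mem_sup_left ?_) (Ideal.mem_sup_right ?_)
  · rw [pow_two] at hy
    induction hy using Submodule.mul_induction_on' with
    | mem_mul_mem a ha b hb =>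
      rw [D.leibniz]
      exact add_mem (K.mul_mem_right _ ha) (K.mul_mem_right _ hb)
    | add a _ b _ ha hb => rw [map_add]; exact add_mem ha hb
  · induction hz using Submodule.span_induction with
    | mem z hz =>
      obtain ⟨a, -, rfl⟩ := hz
      simp
    | zero => simp
    | add a b _ _ ha hb => rw [map_add]; exact add_mem ha hb
    | smul q a h hDa =>
      rw [smul_eq_mul, D.leibniz]
      exact add_mem (Ideal.mul_mem_left _ _ hDa) (Ideal.mul_mem_right _ _ h)

end Taylor

section Relations

open MvPolynomial

variable {A B : Type u} [CommRing A] [CommRing B] [Algebra A B] {I : Ideal A} {n : ℕ}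
  {f : MvPolynomial (Fin n) A →ₐ[A] B}

/- The `g i` measure how far a lift `B → P ⧸ (K² + I P)` of the identity moves the variables
`X i`; the asserted congruence is the Taylor expansion of the lift. -/
theorem exists_mem_ker_forall_sub_sum_pderiv_mul_mem (hB : IsHFormallyEtale (algebraMap A B) I)
    (hf : Function.Surjective f) :
    ∃ g : Fin n → MvPolynomial (Fin n) A, (∀ i, g i ∈ RingHom.ker f) ∧
      ∀ p ∈ RingHom.ker f, p - ∑ i, pderiv i p * g i ∈
        RingHom.ker f ^ 2 ⊔ I.map (algebraMap A (MvPolynomial (Fin n) A)) := by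
  set K := RingHom.ker f
  set IP := I.map (algebraMap A (MvPolynomial (Fin n) A))
  let mkL := Ideal.Quotient.mkₐ A (K ^ 2 ⊔ IP)
  have hM : (K ⊔ IP) ^ (2 + 1) ≤ K ^ 2 ⊔ IP := by
    simpa only [pow_one] using Ideal.sup_pow_add_le_pow_sup_pow (I := K) (J := IP) (n := 2) (m := 1)
  have hKL : (K ⊔ IP).map (Ideal.Quotient.mk (K ^ 2 ⊔ IP)) =
      K.map (Ideal.Quotient.mk (K ^ 2 ⊔ IP)) := by
    rw [Ideal.map_sup, sup_eq_left, (Ideal.map_eq_bot_iff_le_ker _).2]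
    · exact bot_le
    · rw [Ideal.mk_ker]; exact le_sup_right
  obtain ⟨v, hv⟩ := hB.exists_algHom_quotient hf (N := 1) ((pow_one _).trans_le le_sup_right) hM
    le_sup_left
  have hg (i : Fin n) : ∃ g ∈ K, mkL g = v.comp f (X i) - mkL (X i) :=
    (Ideal.mem_map_iff_of_surjective _ Ideal.Quotient.mk_surjective).1 (hKL ▸ hv (X i))
  choose g hgK hg using hg
  have hgg (i j : Fin n) : mkL (g i) * mkL (g j) = 0 := by
    rw [← map_mul]
    refine Ideal.Quotient.eq_zero_iff_mem.2 (Ideal.mem_sup_left ?_)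
    exact pow_two K ▸ Ideal.mul_mem_mul (hgK i) (hgK j)
  refine ⟨-g, fun i => neg_mem (hgK i), fun p hp => Ideal.Quotient.eq_zero_iff_mem.1 ?_⟩
  have hvp : v.comp f p - mkL p = ∑ i, mkL (pderiv i p) * mkL (g i) := by
    simp only [hg] at hgg ⊢
    exact algHom_sub_eq_sum_pderiv_of_mul_eq_zero mkL (v.comp f) hgg p
  have hfp : v.comp f p = 0 := by rw [AlgHom.comp_apply, show f p = 0 from hp, map_zero]
  change mkL _ = 0
  simp only [Pi.neg_apply, mul_neg, Finset.sum_neg_distrib, sub_neg_eq_add, map_add, map_sum,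
    map_mul, ← hvp, hfp]
  ring

theorem eq_zero_of_forall_sum_pderiv_mul_eq_zero (hB : IsHFormallyEtale (algebraMap A B) I)
    (hf : Function.Surjective f) {S : Type u} [CommRing S] [Algebra A S]
    (hS : I.map (algebraMap A S) = ⊥) {φ : MvPolynomial (Fin n) A →ₐ[A] S}
    (hφ : RingHom.ker f ≤ RingHom.ker φ) {b : Fin n → S}
    (hb : ∀ p ∈ RingHom.ker f, ∑ i, φ (pderiv i p) * b i = 0) : b = 0 := by
  let ψ : MvPolynomial (Fin n) A →ₐ[A] DualNumber S :=
    aeval fun i => TrivSqZeroExt.inl (φ (X i)) + TrivSqZeroExt.inr (b i)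
  have hψ : RingHom.ker f ≤ RingHom.ker ψ := fun p hp => by
    rw [RingHom.mem_ker, aeval_inl_add_inr, hb p hp, show φ p = 0 from hφ hp,
      TrivSqZeroExt.inl_zero, TrivSqZeroExt.inr_zero, add_zero]
  funext i
  have hX : (ψ (X i)).snd = 0 := by
    rw [← AlgHom.liftOfSurjective_apply f hf ψ hψ]
    exact hB.snd_eq_zero hS _ _
  simpa [ψ] using hX

/-- The Jacobian matrix `∂ gⱼ / ∂ Xᵢ` of a family of polynomials indexed by the variables. -/
noncomputable def jacobianMatrix {A σ : Type*} [CommRing A] (g : σ → MvPolynomial σ A) :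
    Matrix σ σ (MvPolynomial σ A) :=
  Matrix.of fun i j => pderiv i (g j)

theorem det_jacobianMatrix_sub_one_mem (hB : IsHFormallyEtale (algebraMap A B) I)
    (hf : Function.Surjective f) {g : Fin n → MvPolynomial (Fin n) A}
    (hgK : ∀ i, g i ∈ RingHom.ker f)
    (hg : ∀ p ∈ RingHom.ker f, p - ∑ i, pderiv i p * g i ∈
      RingHom.ker f ^ 2 ⊔ I.map (algebraMap A (MvPolynomial (Fin n) A))) :
    (jacobianMatrix g).det - 1 ∈
      RingHom.ker f ⊔ I.map (algebraMap A (MvPolynomial (Fin n) A)) := by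
  let L := RingHom.ker f ⊔ I.map (algebraMap A (MvPolynomial (Fin n) A))
  let φ := Ideal.Quotient.mkₐ A L
  have hL (p) (hp : p ∈ L) : φ p = 0 := Ideal.Quotient.eq_zero_iff_mem.2 hp
  have hK (p) (hp : p ∈ RingHom.ker f) : φ p = 0 := hL p (Ideal.mem_sup_left hp)
  have hS : I.map (algebraMap A (MvPolynomial (Fin n) A ⧸ L)) = ⊥ := by
    rw [← φ.comp_algebraMap, ← Ideal.map_map, Ideal.map_eq_bot_iff_le_ker]
    exact fun p hp => hL p (Ideal.mem_sup_right hp)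
  have hpderiv (j : Fin n) (p) (hp : p ∈ RingHom.ker f) :
      φ (pderiv j p) = ∑ i, φ (pderiv i p) * φ (pderiv j (g i)) := by
    have h := hL _ (derivation_mem_of_mem_sq_sup_map (pderiv j) (hg p hp))
    simpa [Finset.sum_add_distrib, hK _ (hgK _), sub_eq_zero] using h
  have hone : φ.toRingHom.mapMatrix (jacobianMatrix g) = 1 := by
    ext j i
    refine sub_eq_zero.1 (congrFun (eq_zero_of_forall_sum_pderiv_mul_eq_zero hB hf hS hK
      (b := fun i => φ (pderiv j (g i)) - (1 : Matrix (Fin n) (Fin n) _) j i) fun p hp => ?_) i)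
    simp [mul_sub, Finset.sum_sub_distrib, ← hpderiv j p hp, Matrix.one_apply]
  refine Ideal.Quotient.eq.1 (?_ : φ.toRingHom _ = φ.toRingHom _)
  rw [RingHom.map_det, hone, Matrix.det_one, map_one]

end Relations

section Etale

open MvPolynomial Algebra

theorem etale_localizationAway_of_det_jacobianMatrix_dvd {A : Type*} {σ : Type} [CommRing A]
    [Fintype σ] [DecidableEq σ] (g : σ → MvPolynomial σ A)
    {τ : MvPolynomial σ A ⧸ Ideal.span (Set.range g)}
    (hτ : Ideal.Quotient.mk _ (jacobianMatrix g).det ∣ τ) :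
    Algebra.Etale A (Localization.Away τ) := by
  let P : PreSubmersivePresentation A (MvPolynomial σ A ⧸ Ideal.span (Set.range g)) σ σ :=
    PreSubmersivePresentation.naive (v := g) id Function.injective_id
  have hP : P.jacobiMatrix = jacobianMatrix g := Matrix.ext fun i j => P.jacobiMatrix_apply i j
  have hjac : P.jacobian ∣ τ := by
    rw [PreSubmersivePresentation.jacobian_eq_jacobiMatrix_det, hP]
    exact hτ
  have hunit : IsUnit (algebraMap _ (Localization.Away τ) τ) :=
    IsLocalization.Away.algebraMap_isUnit τ
  let P' : SubmersivePresentation A (Localization.Away τ) _ _ :=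
    { __ := (PreSubmersivePresentation.localizationAway (Localization.Away τ) τ).comp P
      jacobian_isUnit := by
        rw [PreSubmersivePresentation.comp_jacobian_eq_jacobian_smul_jacobian,
          PreSubmersivePresentation.localizationAway_jacobian, Algebra.smul_def]
        exact (isUnit_of_dvd_unit (map_dvd _ hjac) hunit).mul hunit }
  have : Algebra.IsStandardSmoothOfRelativeDimension 0 A (Localization.Away τ) :=
    ⟨_, _, _, inferInstance, P', by
      simp only [PreSubmersivePresentation.dimension_comp_eq_dimension_add_dimension, P']
      simp [Algebra.Presentation.dimension]⟩
  infer_instance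

variable {A : Type*} [CommRing A]

theorem ker_awayMapₐ {Q R : Type*} [CommRing Q] [CommRing R] [Algebra A Q] [Algebra A R]
    (q : Q →ₐ[A] R) (τ : Q) : RingHom.ker (Localization.awayMapₐ q τ) =
      (RingHom.ker q).map (algebraMap Q (Localization.Away τ)) :=
  IsLocalization.ker_map (Localization.Away (q τ)) (q : Q →+* R) (Submonoid.map_powers q τ)

theorem ker_awayMapₐ_le_map {Q R : Type*} [CommRing Q] [CommRing R] [Algebra A Q] [Algebra A R]
    {I : Ideal A} {q : Q →ₐ[A] R} {τ : Q}
    (hτ : ∀ x ∈ RingHom.ker q, τ * x ∈ I.map (algebraMap A Q)) :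
    RingHom.ker (Localization.awayMapₐ q τ) ≤ I.map (algebraMap A (Localization.Away τ)) := by
  rw [ker_awayMapₐ, IsScalarTower.algebraMap_eq A Q (Localization.Away τ), ← Ideal.map_map,
    Ideal.map_le_iff_le_comap]
  intro x hx
  have h := Ideal.mem_map_of_mem (algebraMap Q (Localization.Away τ)) (hτ x hx)
  rw [map_mul] at h
  exact Ideal.mem_comap.2
    ((Ideal.unit_mul_mem_iff_mem _ (IsLocalization.Away.algebraMap_isUnit τ)).1 h)

theorem algHom_apply_mem_map_of_mem_ker_sup_map {P B : Type*} [CommRing P] [CommRing B]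
    [Algebra A P] [Algebra A B] {I : Ideal A} {f : P →ₐ[A] B} {x : P}
    (hx : x ∈ RingHom.ker f ⊔ I.map (algebraMap A P)) : f x ∈ I.map (algebraMap A B) := by
  have hbot : (RingHom.ker f).map (f : P →+* B) = ⊥ :=
    (Ideal.map_eq_bot_iff_le_ker _).2 fun _ hp => hp
  have h := Ideal.mem_map_of_mem (f : P →+* B) hx
  rwa [Ideal.map_sup, hbot, bot_sup_eq, Ideal.map_map, f.comp_algebraMap] at h

theorem exists_relations_of_isHFormallyEtale {A B : Type u} [CommRing A] [CommRing B] [Algebra A B]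
    {I : Ideal A} {n : ℕ} {f : MvPolynomial (Fin n) A →ₐ[A] B}
    (hB : IsHFormallyEtale (algebraMap A B) I) (hf : Function.Surjective f)
    (hfg : (RingHom.ker f).FG) :
    ∃ (g : Fin n → MvPolynomial (Fin n) A) (t : MvPolynomial (Fin n) A),
      (∀ i, g i ∈ RingHom.ker f) ∧ t - 1 ∈ RingHom.ker f ∧
      (∀ p ∈ RingHom.ker f, t * p ∈
        Ideal.span (Set.range g) ⊔ I.map (algebraMap A (MvPolynomial (Fin n) A))) ∧
      (jacobianMatrix g).det - 1 ∈
        RingHom.ker f ⊔ I.map (algebraMap A (MvPolynomial (Fin n) A)) := by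
  obtain ⟨g, hgK, hg⟩ := exists_mem_ker_forall_sub_sum_pderiv_mul_mem hB hf
  have hK : RingHom.ker f ≤
      (Ideal.span (Set.range g) ⊔ I.map (algebraMap A (MvPolynomial (Fin n) A))) ⊔
        RingHom.ker f • RingHom.ker f := fun p hp => by
    have hsum : ∑ i, pderiv i p * g i ∈ Ideal.span (Set.range g) :=
      sum_mem fun i _ => Ideal.mul_mem_left _ _ (Ideal.subset_span ⟨i, rfl⟩)
    rw [sup_right_comm, sup_assoc, smul_eq_mul, ← pow_two]
    exact (Submodule.sub_mem_iff_left _ (Ideal.mem_sup_left hsum)).1 (Ideal.mem_sup_right (hg p hp))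
  obtain ⟨t, ht, htK⟩ := Submodule.exists_sub_one_mem_and_smul_le_of_fg_of_le_sup hfg le_rfl hK
  exact ⟨g, t, hgK, ht, fun p hp => htK (Submodule.smul_mem_pointwise_smul p t _ hp),
    det_jacobianMatrix_sub_one_mem hB hf hgK hg⟩

theorem exists_etale_surjective_localizationAway {A B : Type u} [CommRing A] [CommRing B]
    [Algebra A B] [Algebra.FinitePresentation A B] {I : Ideal A}
    (hB : IsHFormallyEtale (algebraMap A B) I) :
    ∃ s : B, s - 1 ∈ I.map (algebraMap A B) ∧
      ∃ (R : Type u) (_ : CommRing R) (_ : Algebra A R) (φ : R →ₐ[A] Localization.Away s),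
        Algebra.Etale A R ∧ Function.Surjective φ ∧ (RingHom.ker φ).FG ∧
          RingHom.ker φ ≤ I.map (algebraMap A R) := by
  obtain ⟨n, f, hf, hfg⟩ := Algebra.FinitePresentation.out (R := A) (A := B)
  obtain ⟨g, t, hgK, ht, htK, hdet⟩ := exists_relations_of_isHFormallyEtale hB hf hfg
  let G := Ideal.span (Set.range g)
  have hG : G ≤ RingHom.ker f := Ideal.span_le.2 (Set.range_subset_iff.2 hgK)
  let q : MvPolynomial (Fin n) A ⧸ G →ₐ[A] B := Ideal.Quotient.liftₐ G f fun p hp => hG hp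
  have hq : Function.Surjective q := Ideal.Quotient.lift_surjective_of_surjective G hG hf
  have hkerq : RingHom.ker q = (RingHom.ker f).map (Ideal.Quotient.mk G) :=
    Ideal.ker_quotient_lift _ hG
  let τ : MvPolynomial (Fin n) A ⧸ G := Ideal.Quotient.mk G (t * (jacobianMatrix g).det)
  have hft : f t = 1 := by rwa [RingHom.mem_ker, map_sub, map_one, sub_eq_zero] at ht
  have hqτ : q τ = f (jacobianMatrix g).det := by
    rw [show q τ = f (t * _) from rfl, map_mul, hft, one_mul]
  have hqτ1 : q τ - 1 ∈ I.map (algebraMap A B) := by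
    rw [hqτ, ← map_one f, ← map_sub]
    exact algHom_apply_mem_map_of_mem_ker_sup_map hdet
  have hτ : ∀ x ∈ RingHom.ker q, τ * x ∈ I.map (algebraMap A (MvPolynomial (Fin n) A ⧸ G)) := by
    intro x hx
    obtain ⟨p, hp, rfl⟩ :=
      (Ideal.mem_map_iff_of_surjective _ Ideal.Quotient.mk_surjective).1 (hkerq ▸ hx)
    have h := Ideal.mem_map_of_mem (Ideal.Quotient.mk G) (htK p hp)
    rw [Ideal.map_sup, Ideal.map_quotient_self, bot_sup_eq, Ideal.map_map] at h
    rw [← map_mul, mul_comm t, mul_assoc, map_mul]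
    exact Ideal.mul_mem_left _ _ h
  refine ⟨q τ, hqτ1, Localization.Away τ, inferInstance, inferInstance,
    Localization.awayMapₐ q τ, ?_, ?_, ?_, ?_⟩
  · exact etale_localizationAway_of_det_jacobianMatrix_dvd g (map_dvd _ (dvd_mul_left _ t))
  · exact IsLocalization.Away.mapₐ_surjective_of_surjective _ hq
  · rw [ker_awayMapₐ, hkerq]
    exact (hfg.map _).map _
  · exact ker_awayMapₐ_le_map hτ

end Etale

theorem ker_le_map_pow_of_formallyUnramified {A R B : Type u} [CommRing A] [CommRing R]
    [CommRing B] [Algebra A R] [Algebra A B] [Algebra.FormallyUnramified A R] {I : Ideal A}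
    (hB : IsHFormallyEtale (algebraMap A B) I) {φ : R →ₐ[A] B} (hφ : Function.Surjective φ)
    (hker : RingHom.ker φ ≤ I.map (algebraMap A R)) (r : ℕ) :
    RingHom.ker φ ≤ (I ^ r).map (algebraMap A R) := by
  set M := I.map (algebraMap A R)
  obtain ⟨v, hv⟩ := hB.exists_algHom_quotient hφ (L := M ^ r) le_rfl le_rfl hker
  have hM : IsNilpotent (M.map (Ideal.Quotient.mk (M ^ r))) :=
    ⟨r, by rw [← Ideal.map_pow (Ideal.Quotient.mk (M ^ r)), Ideal.map_quotient_self,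
      Ideal.zero_eq_bot]⟩
  have hvφ : v.comp φ = Ideal.Quotient.mkₐ A (M ^ r) :=
    Algebra.FormallyUnramified.ext _ hM fun x => Ideal.Quotient.eq.2 (hv x)
  intro x hx
  rw [Ideal.map_pow, ← Ideal.Quotient.eq_zero_iff_mem]
  calc Ideal.Quotient.mk (M ^ r) x = v (φ x) := congr($hvφ x).symm
    _ = 0 := by rw [show φ x = 0 from hx, map_zero]

theorem IsHfp.exists_etale_surjective_isHenselization {A B : Type u} [CommRing A] [CommRing B]
    {θ : A →+* B} {I : Ideal A} (hB : IsHfp θ I) (hθ : IsHFormallyEtale θ I) :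
    ∃ (R : Type u) (_ : CommRing R) (_ : Algebra A R) (S : Type u) (_ : CommRing S)
      (φ : R →+* S) (j : S →+* B), Algebra.Etale A R ∧ Function.Surjective φ ∧
        (RingHom.ker φ).FG ∧ (∀ r : ℕ, RingHom.ker φ ≤ (I ^ r).map (algebraMap A R)) ∧
        IsHenselization ((I.map (algebraMap A R)).map φ) j ∧
        (j.comp φ).comp (algebraMap A R) = θ := by
  obtain ⟨S, _, ψ, ρ, hψ, rfl, hρ⟩ := hB
  let _ := ψ.toAlgebra
  have : Algebra.FinitePresentation A S := hψ
  obtain ⟨s, hs, R, _, _, φ, hR, hφ, hφfg, hφI⟩ :=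
    exists_etale_surjective_localizationAway (hρ.isHFormallyEtale hθ)
  obtain ⟨j, rfl, hj⟩ := hρ.exists_away hs (Localization.Away s)
  have hφA : (φ : R →+* Localization.Away s).comp (algebraMap A R) =
    (algebraMap S _).comp ψ := φ.comp_algebraMap
  rw [Ideal.map_map] at hj
  have hS : IsHFormallyEtale (algebraMap A (Localization.Away s)) I :=
    hj.isHFormallyEtale hθ
  refine ⟨R, _, _, Localization.Away s, _, φ, j, hR, hφ, hφfg,
    ker_le_map_pow_of_formallyUnramified hS hφ hφI, ?_, ?_⟩
  · rwa [Ideal.map_map, hφA]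
  · rw [RingHom.comp_assoc, hφA, RingHom.comp_assoc]

theorem exists_etale_henselization_quotient_of_isHFormallyEtale_general
    {A B : Type u} [CommRing A] [CommRing B] [Algebra A B] (I : Ideal A)
    (hhfp : IsHfp (algebraMap A B) I) (hfe : IsHFormallyEtale (algebraMap A B) I) :
    ∃ (R : Type u) (_ : CommRing R) (_ : Algebra A R) (H : Type u) (_ : CommRing H)
      (ρ : R →+* H),
      Algebra.Etale A R ∧
      IsHenselization (I.map (algebraMap A R)) ρ ∧
      ∃ J : Ideal H, J.FG ∧
        (∀ r : ℕ, 1 ≤ r → J ≤ (I ^ r).map (ρ.comp (algebraMap A R))) ∧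
        ∃ e : (H ⧸ J) ≃+* B,
          (e : (H ⧸ J) →+* B).comp
            ((Ideal.Quotient.mk J).comp (ρ.comp (algebraMap A R))) = algebraMap A B := by
  obtain ⟨R, _, _, S, _, φ, j, hR, hφ, hφfg, hφI, hj, hjφ⟩ :=
    hhfp.exists_etale_surjective_isHenselization hfe
  obtain ⟨H, _, ρ, hρ⟩ := exists_isHenselization R (I.map (algebraMap A R))
  obtain ⟨e, he⟩ := hρ.exists_ringEquiv_quotient hφ hj
  refine ⟨R, _, _, H, _, ρ, hR, hρ, (RingHom.ker φ).map ρ, hφfg.map ρ, fun r _ => ?_, e, ?_⟩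
  · rw [← Ideal.map_map]
    exact Ideal.map_mono (hφI r)
  · rw [← RingHom.comp_assoc _ ρ, ← RingHom.comp_assoc, he, hjφ]

/-- Structure of h-formally étale hfp algebras: such a `B` is the quotient of the
Henselization `H` of an étale `A`-algebra `R` by a finitely generated ideal `J` contained in
`⋂_{r ≥ 1} I^r·H`. -/
theorem exists_etale_henselization_quotient_of_isHFormallyEtale
    {A B : Type u} [CommRing A] [CommRing B] [Algebra A B]
    (I : Ideal A) [HenselianRing A I]
    (hhfp : IsHfp (algebraMap A B) I)
    (hfe : IsHFormallyEtale (algebraMap A B) I) :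
    ∃ (R : Type u) (_ : CommRing R) (_ : Algebra A R) (H : Type u) (_ : CommRing H)
      (ρ : R →+* H),
      Algebra.Etale A R ∧
      IsHenselization (I.map (algebraMap A R)) ρ ∧
      ∃ J : Ideal H, J.FG ∧
        (∀ r : ℕ, 1 ≤ r → J ≤ (I ^ r).map (ρ.comp (algebraMap A R))) ∧
        ∃ e : (H ⧸ J) ≃+* B,
          (e : (H ⧸ J) →+* B).comp
            ((Ideal.Quotient.mk J).comp (ρ.comp (algebraMap A R))) = algebraMap A B :=
  exists_etale_henselization_quotient_of_isHFormallyEtale_general I hhfp hfe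
end
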